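/- arXiv:1510.07098 — 2 statements merged into one kernel-verified Lean document; each statement's English description precedes it below -/
import Mathlib

section
/- Let ℰ be an exact structure on an abelian category 𝒜 such that 𝒜 has enough ℰ-projectives and enough ℰ-injectives, and let (𝒳,𝒴) be a complete hereditary classical cotorsion pair in 𝒜. If 𝒳 contains all ℰ-projective objects of 𝒜, then (𝒳, 𝒳^⊥ℰ) is a complete hereditary ℰ-cotorsion pair and every object A of 𝒜 admits a monomorphic 𝒳^⊥ℰ-preenvelope j : A → Y with Coker j ∈ 𝒳. -/
open CategoryTheory Category Limits

universe v u

namespace ExactPaper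

variable {𝒜 : Type u} [Category.{v} 𝒜] [Abelian 𝒜]

/-- A morphism is an admissible monic w.r.t. a class `c` of short complexes if it occurs
as the first map of a member of `c`. -/
def AdmMono (c : ShortComplex 𝒜 → Prop) {X Y : 𝒜} (f : X ⟶ Y) : Prop :=
  ∃ (Z : 𝒜) (g : Y ⟶ Z) (w : f ≫ g = 0), c (ShortComplex.mk f g w)

/-- A morphism is an admissible epic w.r.t. a class `c` of short complexes if it occurs
as the second map of a member of `c`. -/
def AdmEpi (c : ShortComplex 𝒜 → Prop) {Y Z : 𝒜} (g : Y ⟶ Z) : Prop :=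
  ∃ (X : 𝒜) (f : X ⟶ Y) (w : f ≫ g = 0), c (ShortComplex.mk f g w)

/-- A (Quillen) exact structure on an abelian category `𝒜`: a class of short exact
sequences, called conflations, closed under isomorphisms, containing all split short
exact sequences, such that admissible monics and epics are closed under composition,
pushouts of admissible monics along arbitrary morphisms are admissible monics and
pullbacks of admissible epics along arbitrary morphisms are admissible epics. -/
structure ExactStructure (𝒜 : Type u) [Category.{v} 𝒜] [Abelian 𝒜] where
  conflation : ShortComplex 𝒜 → Prop
  shortExact_of_conflation : ∀ (S : ShortComplex 𝒜), conflation S → S.ShortExact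
  conflation_of_iso : ∀ (S T : ShortComplex 𝒜), (S ≅ T) → conflation S → conflation T
  conflation_of_splitting : ∀ (S : ShortComplex 𝒜), S.Splitting → conflation S
  admMono_comp : ∀ {X Y Z : 𝒜} (f : X ⟶ Y) (g : Y ⟶ Z),
    AdmMono conflation f → AdmMono conflation g → AdmMono conflation (f ≫ g)
  admEpi_comp : ∀ {X Y Z : 𝒜} (f : X ⟶ Y) (g : Y ⟶ Z),
    AdmEpi conflation f → AdmEpi conflation g → AdmEpi conflation (f ≫ g)
  admMono_pushout : ∀ {L M M' : 𝒜} (i : L ⟶ M) (f : L ⟶ M'),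
    AdmMono conflation i → AdmMono conflation (pushout.inr i f)
  admEpi_pullback : ∀ {M N M' : 𝒜} (p : M ⟶ N) (g : M' ⟶ N),
    AdmEpi conflation p → AdmEpi conflation (pullback.snd p g)

namespace ExactStructure

variable (E : ExactStructure 𝒜)

/-- An `ℰ`-projective object. -/
def EProjective (P : 𝒜) : Prop :=
  ∀ (S : ShortComplex 𝒜), E.conflation S → ∀ h : P ⟶ S.X₃, ∃ k : P ⟶ S.X₂, k ≫ S.g = h

/-- An `ℰ`-injective object. -/
def EInjective (I : 𝒜) : Prop :=
  ∀ (S : ShortComplex 𝒜), E.conflation S → ∀ h : S.X₁ ⟶ I, ∃ k : S.X₂ ⟶ I, S.f ≫ k = h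

/-- `𝒜` has enough `ℰ`-projectives. -/
def EnoughProjectives : Prop :=
  ∀ M : 𝒜, ∃ (K P : 𝒜) (i : K ⟶ P) (p : P ⟶ M) (w : i ≫ p = 0),
    E.conflation (ShortComplex.mk i p w) ∧ E.EProjective P

/-- `𝒜` has enough `ℰ`-injectives. -/
def EnoughInjectives : Prop :=
  ∀ M : 𝒜, ∃ (I C : 𝒜) (i : M ⟶ I) (p : I ⟶ C) (w : i ≫ p = 0),
    E.conflation (ShortComplex.mk i p w) ∧ E.EInjective I

/-- `Ext¹_ℰ(M,N) = 0`: every conflation `0 → N → Z → M → 0` splits. -/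
def Ext1Zero (M N : 𝒜) : Prop :=
  ∀ (Z : 𝒜) (i : N ⟶ Z) (p : Z ⟶ M) (w : i ≫ p = 0),
    E.conflation (ShortComplex.mk i p w) → ∃ r : Z ⟶ N, i ≫ r = 𝟙 N

/-- The right `ℰ`-orthogonal class `𝒳^⊥`. -/
def rightPerp (𝒳 : Set 𝒜) : Set 𝒜 := {N | ∀ X ∈ 𝒳, E.Ext1Zero X N}

/-- The left `ℰ`-orthogonal class `^⊥𝒴`. -/
def leftPerp (𝒴 : Set 𝒜) : Set 𝒜 := {M | ∀ Y ∈ 𝒴, E.Ext1Zero M Y}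

/-- A class is closed under `ℰ`-extensions. -/
def ClosedUnderExtensions (𝒯 : Set 𝒜) : Prop :=
  ∀ S : ShortComplex 𝒜, E.conflation S → S.X₁ ∈ 𝒯 → S.X₃ ∈ 𝒯 → S.X₂ ∈ 𝒯

/-- An `ℰ`-resolving class. -/
def Resolving (𝒯 : Set 𝒜) : Prop :=
  (∀ P : 𝒜, E.EProjective P → P ∈ 𝒯) ∧ E.ClosedUnderExtensions 𝒯 ∧
    ∀ S : ShortComplex 𝒜, E.conflation S → S.X₂ ∈ 𝒯 → S.X₃ ∈ 𝒯 → S.X₁ ∈ 𝒯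

/-- An `ℰ`-coresolving class. -/
def Coresolving (𝒯 : Set 𝒜) : Prop :=
  (∀ I : 𝒜, E.EInjective I → I ∈ 𝒯) ∧ E.ClosedUnderExtensions 𝒯 ∧
    ∀ S : ShortComplex 𝒜, E.conflation S → S.X₁ ∈ 𝒯 → S.X₂ ∈ 𝒯 → S.X₃ ∈ 𝒯

/-- `(𝒳,𝒴)` is a complete hereditary `ℰ`-cotorsion pair. -/
def CompleteHereditaryCotorsionPair (𝒳 𝒴 : Set 𝒜) : Prop :=
  𝒳 = E.leftPerp 𝒴 ∧ 𝒴 = E.rightPerp 𝒳 ∧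
  (∀ A : 𝒜, ∃ (Y X : 𝒜) (i : Y ⟶ X) (p : X ⟶ A) (w : i ≫ p = 0),
      E.conflation (ShortComplex.mk i p w) ∧ X ∈ 𝒳 ∧ Y ∈ 𝒴) ∧
  (∀ A : 𝒜, ∃ (Y' X' : 𝒜) (i : A ⟶ Y') (p : Y' ⟶ X') (w : i ≫ p = 0),
      E.conflation (ShortComplex.mk i p w) ∧ X' ∈ 𝒳 ∧ Y' ∈ 𝒴) ∧
  E.Resolving 𝒳

end ExactStructure

/-- `f : X ⟶ A` is an `𝒳`-precover of `A`. -/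
def IsPrecover (𝒳 : Set 𝒜) {X A : 𝒜} (f : X ⟶ A) : Prop :=
  X ∈ 𝒳 ∧ ∀ X' : 𝒜, X' ∈ 𝒳 → ∀ g : X' ⟶ A, ∃ h : X' ⟶ X, h ≫ f = g

/-- `f : X ⟶ A` is an `𝒳`-cover of `A`. -/
def IsCover (𝒳 : Set 𝒜) {X A : 𝒜} (f : X ⟶ A) : Prop :=
  IsPrecover 𝒳 f ∧ ∀ h : X ⟶ X, h ≫ f = f → IsIso h

/-- `f : A ⟶ Y` is a `𝒴`-preenvelope of `A`. -/
def IsPreenvelope (𝒴 : Set 𝒜) {A Y : 𝒜} (f : A ⟶ Y) : Prop :=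
  Y ∈ 𝒴 ∧ ∀ Y' : 𝒜, Y' ∈ 𝒴 → ∀ g : A ⟶ Y', ∃ h : Y ⟶ Y', f ≫ h = g

/-- `f : A ⟶ Y` is a `𝒴`-envelope of `A`. -/
def IsEnvelope (𝒴 : Set 𝒜) {A Y : 𝒜} (f : A ⟶ Y) : Prop :=
  IsPreenvelope 𝒴 f ∧ ∀ h : Y ⟶ Y, f ≫ h = f → IsIso h

/-- A class of objects closed under isomorphisms. -/
def ClosedUnderIsos (𝒳 : Set 𝒜) : Prop := ∀ X Y : 𝒜, (X ≅ Y) → X ∈ 𝒳 → Y ∈ 𝒳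

/-- A class of objects closed under direct summands. -/
def ClosedUnderDirectSummands (𝒳 : Set 𝒜) : Prop :=
  ∀ X Y : 𝒜, (∃ (s : Y ⟶ X) (r : X ⟶ Y), s ≫ r = 𝟙 Y) → X ∈ 𝒳 → Y ∈ 𝒳

end ExactPaper

namespace ExactPaper

open CategoryTheory Limits

variable {𝒜 : Type u} [Category.{v} 𝒜] [Abelian 𝒜]

/-- Classical `Ext¹_𝒜(M,N) = 0`: every short exact sequence `0 → N → Z → M → 0` splits. -/
def Ext1ZeroClassical (M N : 𝒜) : Prop :=
  ∀ (Z : 𝒜) (i : N ⟶ Z) (p : Z ⟶ M) (w : i ≫ p = 0),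
    (ShortComplex.mk i p w).ShortExact → ∃ r : Z ⟶ N, i ≫ r = 𝟙 N

/-- The classical right orthogonal class `𝒳^⊥₁`. -/
def rightPerp1 (𝒳 : Set 𝒜) : Set 𝒜 := {N | ∀ X ∈ 𝒳, Ext1ZeroClassical X N}

/-- The classical left orthogonal class `^⊥₁𝒴`. -/
def leftPerp1 (𝒴 : Set 𝒜) : Set 𝒜 := {M | ∀ Y ∈ 𝒴, Ext1ZeroClassical M Y}

/-- `(𝒳,𝒴)` is a complete hereditary classical cotorsion pair in `𝒜`. -/
def CompleteHereditaryClassicalCotorsionPair (𝒳 𝒴 : Set 𝒜) : Prop :=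
  𝒳 = leftPerp1 𝒴 ∧ 𝒴 = rightPerp1 𝒳 ∧
  (∀ A : 𝒜, ∃ (Y X : 𝒜) (i : Y ⟶ X) (p : X ⟶ A) (w : i ≫ p = 0),
      (ShortComplex.mk i p w).ShortExact ∧ X ∈ 𝒳 ∧ Y ∈ 𝒴) ∧
  (∀ A : 𝒜, ∃ (Y' X' : 𝒜) (i : A ⟶ Y') (p : Y' ⟶ X') (w : i ≫ p = 0),
      (ShortComplex.mk i p w).ShortExact ∧ X' ∈ 𝒳 ∧ Y' ∈ 𝒴) ∧
  (∀ (S : ShortComplex 𝒜), S.ShortExact → S.X₂ ∈ 𝒳 → S.X₃ ∈ 𝒳 → S.X₁ ∈ 𝒳)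

end ExactPaper

/-!
A special `𝒳`-precover `0 ⟶ Y ⟶ X ⟶ A ⟶ 0` is automatically a conflation: an admissible epic
`P ⟶ A` from an `ℰ`-projective object, which lies in `𝒳`, lifts along `X ⟶ A` because
`Ext¹(P, Y) = 0`, and an epimorphism through which an admissible epic factors is admissible.

Special preenvelopes come from Salce's trick: embed `A` into an `ℰ`-injective object `I`, with
cokernel `C`, take a special precover `0 ⟶ Y ⟶ X ⟶ C ⟶ 0` and form the pullback of `I` and `X`
over `C`. It is an extension of `X` by `A`, and it lies in `𝒳^⊥ℰ` as an extension of `I` by `Y`.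
-/

namespace ExactPaper

variable {𝒜 : Type u} [Category.{v} 𝒜] [Abelian 𝒜]

section ShortExact

variable {S : ShortComplex 𝒜}

lemma exists_retraction_iff_exists_section (hS : S.ShortExact) :
    (∃ r : S.X₂ ⟶ S.X₁, S.f ≫ r = 𝟙 S.X₁) ↔ ∃ s : S.X₃ ⟶ S.X₂, s ≫ S.g = 𝟙 S.X₃ := by
  constructor
  · rintro ⟨r, hr⟩
    exact ⟨_, (ShortComplex.Splitting.ofExactOfRetraction S hS.exact r hr hS.epi_g).s_g⟩
  · rintro ⟨s, hs⟩
    exact ⟨_, (ShortComplex.Splitting.ofExactOfSection S hS.exact s hs hS.mono_f).f_r⟩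

lemma shortExact_of_isPullback (hS : S.ShortExact) {P M : 𝒜} {fst : P ⟶ S.X₂} {snd : P ⟶ M}
    {f : M ⟶ S.X₃} (sq : IsPullback fst snd S.g f) :
    (ShortComplex.mk (sq.lift S.f 0 (by simp)) snd (sq.lift_snd _ _ _)).ShortExact := by
  have : Mono S.f := hS.mono_f
  have mono_lift : Mono (sq.lift S.f 0 (by simp)) :=
    mono_of_mono_fac (sq.lift_fst S.f 0 (by simp))
  have epi_snd : Epi snd := (MorphismProperty.epimorphisms 𝒜).of_isPullback sq hS.epi_g
  refine .mk' (ShortComplex.exact_of_f_is_kernel _ ?_) mono_lift epi_snd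
  refine KernelFork.IsLimit.ofι' _ _ fun {W} k hk ↦ ?_
  have fst_g : (k ≫ fst) ≫ S.g = 0 := by
    rw [assoc, sq.w, reassoc_of% hk, zero_comp]
  exact ⟨hS.exact.lift _ fst_g, sq.hom_ext (by simp) (by simpa using hk.symm)⟩

lemma shortExact_of_isPushout (hS : S.ShortExact) {Q N : 𝒜} {f : S.X₁ ⟶ N} {inl : S.X₂ ⟶ Q}
    {inr : N ⟶ Q} (sq : IsPushout S.f f inl inr) :
    (ShortComplex.mk inr (sq.desc S.g 0 (by simp)) (sq.inr_desc _ _ _)).ShortExact := by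
  have : Epi S.g := hS.epi_g
  have mono_inr : Mono inr := (MorphismProperty.monomorphisms 𝒜).of_isPushout sq.flip hS.mono_f
  have epi_desc : Epi (sq.desc S.g 0 (by simp)) :=
    epi_of_epi_fac (sq.inl_desc S.g 0 (by simp))
  refine .mk' (ShortComplex.exact_of_g_is_cokernel _ ?_) mono_inr epi_desc
  refine CokernelCofork.IsColimit.ofπ' _ _ fun {W} k hk ↦ ?_
  have f_inl : S.f ≫ inl ≫ k = 0 := by
    rw [sq.w_assoc, hk, comp_zero]
  exact ⟨hS.exact.desc _ f_inl, sq.hom_ext (by simp) (by simpa using hk.symm)⟩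

lemma shortExact_comp_of_isPullback (hS : S.ShortExact) {V W : 𝒜} {q : W ⟶ S.X₂} [Epi q]
    {fst : V ⟶ W} {snd : V ⟶ S.X₁} (sq : IsPullback fst snd q S.f) :
    (ShortComplex.mk fst (q ≫ S.g) (by simp [sq.w_assoc])).ShortExact := by
  have : Mono S.f := hS.mono_f
  have : Epi S.g := hS.epi_g
  have mono_fst : Mono fst := (MorphismProperty.monomorphisms 𝒜).of_isPullback sq.flip hS.mono_f
  refine .mk' (ShortComplex.exact_of_f_is_kernel _ ?_) mono_fst (epi_comp q S.g)
  refine KernelFork.IsLimit.ofι' _ _ fun {T} k hk ↦ ?_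
  exact ⟨sq.lift k (hS.exact.lift (k ≫ q) (by simpa using hk)) (by simp), sq.lift_fst _ _ _⟩

lemma shortExact_comp_of_isPushout (hS : S.ShortExact) {V W : 𝒜} {m : S.X₂ ⟶ W} [Mono m]
    {inl : W ⟶ V} {inr : S.X₃ ⟶ V} (sq : IsPushout m S.g inl inr) :
    (ShortComplex.mk (S.f ≫ m) inl (by simp [sq.w])).ShortExact := by
  have : Mono S.f := hS.mono_f
  have : Epi S.g := hS.epi_g
  have epi_inl : Epi inl := (MorphismProperty.epimorphisms 𝒜).of_isPushout sq hS.epi_g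
  refine .mk' (ShortComplex.exact_of_g_is_cokernel _ ?_) (mono_comp S.f m) epi_inl
  refine CokernelCofork.IsColimit.ofπ' _ _ fun {T} k hk ↦ ?_
  exact ⟨sq.desc k (hS.exact.desc (m ≫ k) (by simpa using hk)) (by simp), sq.inl_desc _ _ _⟩

lemma isPushout_of_shortExact_of_isIso₃ {S₁ S₂ : ShortComplex 𝒜} (h₁ : S₁.ShortExact)
    (h₂ : S₂.ShortExact) (φ : S₁ ⟶ S₂) [IsIso φ.τ₃] :
    IsPushout S₁.f φ.τ₁ φ.τ₂ S₂.f := by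
  have sq := IsPushout.of_hasPushout S₁.f φ.τ₁
  let ψ : ShortComplex.mk _ _ (sq.inr_desc S₁.g 0 (by simp)) ⟶ S₂ :=
    { τ₁ := 𝟙 _
      τ₂ := sq.desc φ.τ₂ S₂.f φ.comm₁₂.symm
      τ₃ := φ.τ₃
      comm₁₂ := by simp
      comm₂₃ := sq.hom_ext (by simp [φ.comm₂₃]) (by simp) }
  have : IsIso ψ.τ₁ := inferInstanceAs (IsIso (𝟙 _))
  have : IsIso ψ.τ₃ := inferInstanceAs (IsIso φ.τ₃)
  have : IsIso ψ.τ₂ :=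
    ShortComplex.isIso₂_of_shortExact_of_isIso₁₃ ψ (shortExact_of_isPushout h₁ sq) h₂
  exact .of_iso sq (Iso.refl _) (Iso.refl _) (Iso.refl _) (asIso ψ.τ₂) (by simp) (by simp)
    (by simp [ψ]) (by simp [ψ])

end ShortExact

namespace ExactStructure

variable (E : ExactStructure 𝒜) {S : ShortComplex 𝒜}

lemma conflation_of_admMono (hS : S.ShortExact) (h : AdmMono E.conflation S.f) :
    E.conflation S := by
  obtain ⟨Z, g, w, hT⟩ := h
  have hT' := E.shortExact_of_conflation _ hT
  let e : Z ≅ S.X₃ := hT'.gIsCokernel.coconePointUniqueUpToIso hS.gIsCokernel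
  have g_e : g ≫ e.hom = S.g :=
    hT'.gIsCokernel.comp_coconePointUniqueUpToIso_hom hS.gIsCokernel .one
  exact E.conflation_of_iso (.mk S.f g w) S
    (ShortComplex.isoMk (Iso.refl _) (Iso.refl _) e (by simp) (by simp [g_e])) hT

lemma conflation_of_admEpi (hS : S.ShortExact) (h : AdmEpi E.conflation S.g) :
    E.conflation S := by
  obtain ⟨Z, f, w, hT⟩ := h
  have hT' := E.shortExact_of_conflation _ hT
  let e : Z ≅ S.X₁ := hT'.fIsKernel.conePointUniqueUpToIso hS.fIsKernel
  have e_f : e.hom ≫ S.f = f :=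
    hT'.fIsKernel.conePointUniqueUpToIso_hom_comp hS.fIsKernel .zero
  exact E.conflation_of_iso (.mk f S.g w) S
    (ShortComplex.isoMk e (Iso.refl _) (Iso.refl _) (by simp [e_f]) (by simp)) hT

lemma admMono_of_isPushout {L M N Q : 𝒜} {i : L ⟶ M} {f : L ⟶ N} {inl : M ⟶ Q} {inr : N ⟶ Q}
    (sq : IsPushout i f inl inr) (hi : AdmMono E.conflation i) : AdmMono E.conflation inr := by
  obtain ⟨C, c, w, hc⟩ := E.admMono_pushout i f hi
  exact ⟨C, sq.isoPushout.hom ≫ c, by simp [w], E.conflation_of_iso (.mk _ c w) _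
    (ShortComplex.isoMk (Iso.refl _) sq.isoPushout.symm (Iso.refl _) (by simp) (by simp)) hc⟩

lemma admEpi_of_isPullback {M N L P : 𝒜} {p : M ⟶ N} {f : L ⟶ N} {fst : P ⟶ M} {snd : P ⟶ L}
    (sq : IsPullback fst snd p f) (hp : AdmEpi E.conflation p) : AdmEpi E.conflation snd := by
  obtain ⟨K, k, w, hk⟩ := E.admEpi_pullback p f hp
  exact ⟨K, k ≫ sq.isoPullback.inv, by simp [w], E.conflation_of_iso (.mk k _ w) _
    (ShortComplex.isoMk (Iso.refl _) sq.isoPullback.symm (Iso.refl _) (by simp) (by simp)) hk⟩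

variable {E}

lemma admMono_of_conflation (hS : E.conflation S) : AdmMono E.conflation S.f :=
  ⟨_, _, _, hS⟩

lemma admEpi_of_conflation (hS : E.conflation S) : AdmEpi E.conflation S.g :=
  ⟨_, _, _, hS⟩

lemma conflation_of_isPullback (hS : E.conflation S) {P M : 𝒜} {fst : P ⟶ S.X₂} {snd : P ⟶ M}
    {f : M ⟶ S.X₃} (sq : IsPullback fst snd S.g f) :
    E.conflation (.mk (sq.lift S.f 0 (by simp)) snd (sq.lift_snd _ _ _)) :=
  E.conflation_of_admEpi (shortExact_of_isPullback (E.shortExact_of_conflation S hS) sq)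
    (E.admEpi_of_isPullback sq (admEpi_of_conflation hS))

lemma conflation_of_isPushout (hS : E.conflation S) {Q N : 𝒜} {f : S.X₁ ⟶ N} {inl : S.X₂ ⟶ Q}
    {inr : N ⟶ Q} (sq : IsPushout S.f f inl inr) :
    E.conflation (.mk inr (sq.desc S.g 0 (by simp)) (sq.inr_desc _ _ _)) :=
  E.conflation_of_admMono (shortExact_of_isPushout (E.shortExact_of_conflation S hS) sq)
    (E.admMono_of_isPushout sq (admMono_of_conflation hS))

/-- `S` is the pushout of the given conflation along the map induced by `k` on kernels. -/
lemma conflation_of_admEpi_comp (hS : S.ShortExact) {P : 𝒜} (k : P ⟶ S.X₂)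
    (hk : AdmEpi E.conflation (k ≫ S.g)) : E.conflation S := by
  obtain ⟨K, i, w, hT⟩ := hk
  have : Mono S.f := hS.mono_f
  have w' : (i ≫ k) ≫ S.g = 0 := by rw [assoc, w]
  let φ : ShortComplex.mk i (k ≫ S.g) w ⟶ S :=
    { τ₁ := hS.exact.lift (i ≫ k) w'
      τ₂ := k
      τ₃ := 𝟙 _ }
  have : IsIso φ.τ₃ := inferInstanceAs (IsIso (𝟙 _))
  have sq := isPushout_of_shortExact_of_isIso₃ (E.shortExact_of_conflation _ hT) hS φ
  exact E.conflation_of_admMono hS (E.admMono_of_isPushout sq (admMono_of_conflation hT))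

lemma Ext1Zero.exists_lift (hS : E.conflation S) {M : 𝒜} (h : E.Ext1Zero M S.X₁)
    (f : M ⟶ S.X₃) : ∃ l : M ⟶ S.X₂, l ≫ S.g = f := by
  have sq := IsPullback.of_hasPullback S.g f
  have hT := conflation_of_isPullback hS sq
  obtain ⟨s, hs⟩ := (exists_retraction_iff_exists_section (E.shortExact_of_conflation _ hT)).1
    (h _ _ _ _ hT)
  exact ⟨s ≫ pullback.fst S.g f, by rw [assoc, sq.w, reassoc_of% hs]⟩

lemma Ext1Zero.exists_extension (hS : E.conflation S) {N : 𝒜} (h : E.Ext1Zero S.X₃ N)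
    (f : S.X₁ ⟶ N) : ∃ e : S.X₂ ⟶ N, S.f ≫ e = f := by
  have sq := IsPushout.of_hasPushout S.f f
  obtain ⟨r, hr⟩ := h _ _ _ _ (conflation_of_isPushout hS sq)
  exact ⟨pushout.inl S.f f ≫ r, by rw [sq.w_assoc, hr, comp_id]⟩

/-- A conflation `0 ⟶ S.X₂ ⟶ Z ⟶ X ⟶ 0` pushed out along `S.g` splits, and the resulting map from
`X` to the pushout lifts to `Z` since `Z` maps onto the pushout with kernel `S.X₁`. -/
lemma Ext1Zero.of_conflation_right {X : 𝒜} (hS : E.conflation S) (h₁ : E.Ext1Zero X S.X₁)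
    (h₃ : E.Ext1Zero X S.X₃) : E.Ext1Zero X S.X₂ := by
  intro Z i p w hT
  have hT' := E.shortExact_of_conflation _ hT
  have : Mono i := hT'.mono_f
  have sq := IsPushout.of_hasPushout i S.g
  have hV : E.conflation (.mk (S.f ≫ i) (pushout.inl i S.g) (by simp [sq.w])) :=
    E.conflation_of_admMono
      (shortExact_comp_of_isPushout (E.shortExact_of_conflation S hS) sq)
      (E.admMono_comp _ _ (admMono_of_conflation hS) (admMono_of_conflation hT))
  have hU := conflation_of_isPushout hT sq
  obtain ⟨s, hs⟩ := (exists_retraction_iff_exists_section (E.shortExact_of_conflation _ hU)).1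
    (h₃ _ _ _ _ hU)
  obtain ⟨l, hl⟩ := h₁.exists_lift hV s
  refine (exists_retraction_iff_exists_section hT').2 ⟨l, ?_⟩
  calc l ≫ p = (l ≫ pushout.inl i S.g) ≫ sq.desc p 0 (by simp [w]) := by simp
    _ = 𝟙 X := by rw [hl, hs]

lemma Ext1Zero.of_conflation_left {N : 𝒜} (hS : E.conflation S) (h₁ : E.Ext1Zero S.X₁ N)
    (h₃ : E.Ext1Zero S.X₃ N) : E.Ext1Zero S.X₂ N := by
  intro Z i p w hT
  have : Epi p := (E.shortExact_of_conflation _ hT).epi_g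
  have sq := IsPullback.of_hasPullback p S.f
  have hV : E.conflation (.mk (pullback.fst p S.f) (p ≫ S.g) (by simp [sq.w_assoc])) :=
    E.conflation_of_admEpi
      (shortExact_comp_of_isPullback (E.shortExact_of_conflation S hS) sq)
      (E.admEpi_comp _ _ (admEpi_of_conflation hT) (admEpi_of_conflation hS))
  obtain ⟨r, hr⟩ := h₁ _ _ _ _ (conflation_of_isPullback hT sq)
  obtain ⟨e, he⟩ := h₃.exists_extension hV r
  refine ⟨e, ?_⟩
  calc i ≫ e = sq.lift i 0 (by simp [w]) ≫ pullback.fst p S.f ≫ e := by simp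
    _ = 𝟙 N := by rw [he, hr]

lemma EInjective.ext1Zero {I : 𝒜} (hI : E.EInjective I) (M : 𝒜) : E.Ext1Zero M I :=
  fun _ _ _ _ hT ↦ hI _ hT (𝟙 I)

end ExactStructure

section Classical

lemma Ext1ZeroClassical.exists_lift {S : ShortComplex 𝒜} (hS : S.ShortExact) {M : 𝒜}
    (h : Ext1ZeroClassical M S.X₁) (f : M ⟶ S.X₃) :
    ∃ l : M ⟶ S.X₂, l ≫ S.g = f := by
  have sq := IsPullback.of_hasPullback S.g f
  have hT := shortExact_of_isPullback hS sq
  obtain ⟨s, hs⟩ := (exists_retraction_iff_exists_section hT).1 (h _ _ _ _ hT)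
  exact ⟨s ≫ pullback.fst S.g f, by rw [assoc, sq.w, reassoc_of% hs]⟩

lemma closedUnderDirectSummands_leftPerp1 (𝒴 : Set 𝒜) :
    ClosedUnderDirectSummands (leftPerp1 𝒴) := by
  rintro X M ⟨s, r, hsr⟩ hX Y hY _ _ _ _ hS
  obtain ⟨l, hl⟩ := (hX Y hY).exists_lift hS r
  exact (exists_retraction_iff_exists_section hS).2 ⟨s ≫ l, by rw [assoc, hl, hsr]⟩

/-- `𝒳` is special precovering in `𝒜`: every object is the quotient of an object of `𝒳` by an
object of the classical right orthogonal class of `𝒳`. -/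
def SpecialPrecovering1 (𝒳 : Set 𝒜) : Prop :=
  ∀ A : 𝒜, ∃ (Y X : 𝒜) (i : Y ⟶ X) (p : X ⟶ A) (w : i ≫ p = 0),
    (ShortComplex.mk i p w).ShortExact ∧ X ∈ 𝒳 ∧ Y ∈ rightPerp1 𝒳

end Classical

namespace ExactStructure

variable {E : ExactStructure 𝒜} {𝒳 : Set 𝒜}

variable (E 𝒳) in
/-- `𝒳` is special precovering relative to `ℰ`: every object `A` sits in a conflation
`0 ⟶ Y ⟶ X ⟶ A ⟶ 0` with `X ∈ 𝒳` and `Y ∈ 𝒳^⊥ℰ`. -/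
def SpecialPrecovering : Prop :=
  ∀ A : 𝒜, ∃ (Y X : 𝒜) (i : Y ⟶ X) (p : X ⟶ A) (w : i ≫ p = 0),
    E.conflation (ShortComplex.mk i p w) ∧ X ∈ 𝒳 ∧ Y ∈ E.rightPerp 𝒳

variable (E 𝒳) in
/-- `𝒳^⊥ℰ` is special preenveloping relative to `ℰ`: every object `A` sits in a conflation
`0 ⟶ A ⟶ Y ⟶ X ⟶ 0` with `X ∈ 𝒳` and `Y ∈ 𝒳^⊥ℰ`. -/
def SpecialPreenveloping : Prop :=
  ∀ A : 𝒜, ∃ (Y X : 𝒜) (i : A ⟶ Y) (p : Y ⟶ X) (w : i ≫ p = 0),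
    E.conflation (ShortComplex.mk i p w) ∧ X ∈ 𝒳 ∧ Y ∈ E.rightPerp 𝒳

lemma rightPerp1_subset_rightPerp : rightPerp1 𝒳 ⊆ E.rightPerp 𝒳 :=
  fun _ hN X hX Z i p w hS ↦ hN X hX Z i p w (E.shortExact_of_conflation _ hS)

lemma SpecialPrecovering.of_classical (hproj : E.EnoughProjectives)
    (hP : ∀ P : 𝒜, E.EProjective P → P ∈ 𝒳) (h : SpecialPrecovering1 𝒳) :
    E.SpecialPrecovering 𝒳 := by
  intro A
  obtain ⟨Y, X, i, p, w, hS, hX, hY⟩ := h A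
  obtain ⟨_, P, _, q, _, hT, hPproj⟩ := hproj A
  obtain ⟨k, rfl⟩ := (hY P (hP P hPproj)).exists_lift hS q
  exact ⟨Y, X, i, p, w, conflation_of_admEpi_comp hS k (admEpi_of_conflation hT), hX,
    rightPerp1_subset_rightPerp hY⟩

lemma SpecialPrecovering.specialPreenveloping (h : E.SpecialPrecovering 𝒳)
    (hinj : E.EnoughInjectives) : E.SpecialPreenveloping 𝒳 := by
  intro A
  obtain ⟨_, C, _, p, _, hA, hI⟩ := hinj A
  obtain ⟨_, X, _, q, _, hC, hX, hY⟩ := h C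
  have sq := IsPullback.of_hasPullback p q
  have hpullback : pullback p q ∈ E.rightPerp 𝒳 := fun X' hX' ↦
    .of_conflation_right (conflation_of_isPullback hC sq.flip) (hY X' hX') (hI.ext1Zero X')
  exact ⟨_, X, _, _, _, conflation_of_isPullback hA sq, hX, hpullback⟩

lemma SpecialPrecovering.eq_leftPerp_rightPerp (h : E.SpecialPrecovering 𝒳)
    (hsummand : ClosedUnderDirectSummands 𝒳) : 𝒳 = E.leftPerp (E.rightPerp 𝒳) := by
  refine Set.Subset.antisymm (fun X hX Y hY ↦ hY X hX) fun M hM ↦ ?_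
  obtain ⟨Y, X, _, p, _, hS, hX, hY⟩ := h M
  obtain ⟨s, hs⟩ := (exists_retraction_iff_exists_section (E.shortExact_of_conflation _ hS)).1
    (hM Y hY _ _ _ _ hS)
  exact hsummand X M ⟨s, p, hs⟩ hX

lemma closedUnderExtensions_leftPerp (𝒴 : Set 𝒜) : E.ClosedUnderExtensions (E.leftPerp 𝒴) :=
  fun _ hS h₁ h₃ Y hY ↦ .of_conflation_left hS (h₁ Y hY) (h₃ Y hY)

lemma SpecialPreenveloping.exists_mono_preenvelope (h : E.SpecialPreenveloping 𝒳)
    (hsummand : ClosedUnderDirectSummands 𝒳) (A : 𝒜) :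
    ∃ (Y : 𝒜) (j : A ⟶ Y), Mono j ∧ IsPreenvelope (E.rightPerp 𝒳) j ∧ cokernel j ∈ 𝒳 := by
  obtain ⟨Y, X, j, _, _, hS, hX, hY⟩ := h A
  have hS' := E.shortExact_of_conflation _ hS
  let e : cokernel j ≅ X := (cokernelIsCokernel j).coconePointUniqueUpToIso hS'.gIsCokernel
  exact ⟨Y, j, hS'.mono_f, ⟨hY, fun Y' hY' f ↦ (hY' X hX).exists_extension hS f⟩,
    hsummand X _ ⟨e.hom, e.inv, e.hom_inv_id⟩ hX⟩

end ExactStructure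

end ExactPaper

open ExactPaper CategoryTheory Limits in
theorem eCotorsionPair_of_classical_cotorsionPair_proj_general
    {𝒜 : Type u} [Category.{v} 𝒜] [Abelian 𝒜]
    (E : ExactStructure 𝒜)
    (hproj : E.EnoughProjectives) (hinj : E.EnoughInjectives)
    (𝒳 : Set 𝒜)
    (hprecover : SpecialPrecovering1 𝒳)
    (hsummand : ClosedUnderDirectSummands 𝒳)
    (hker : ∀ S : ShortComplex 𝒜, E.conflation S → S.X₂ ∈ 𝒳 → S.X₃ ∈ 𝒳 → S.X₁ ∈ 𝒳)
    (hP : ∀ P : 𝒜, E.EProjective P → P ∈ 𝒳) :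
    E.CompleteHereditaryCotorsionPair 𝒳 (E.rightPerp 𝒳) ∧
      ∀ A : 𝒜, ∃ (Y : 𝒜) (j : A ⟶ Y),
        Mono j ∧ IsPreenvelope (E.rightPerp 𝒳) j ∧ cokernel j ∈ 𝒳 := by
  have precovering : E.SpecialPrecovering 𝒳 := .of_classical hproj hP hprecover
  have preenveloping : E.SpecialPreenveloping 𝒳 := precovering.specialPreenveloping hinj
  have hleft : 𝒳 = E.leftPerp (E.rightPerp 𝒳) := precovering.eq_leftPerp_rightPerp hsummand
  have hext : E.ClosedUnderExtensions 𝒳 :=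
    hleft ▸ ExactStructure.closedUnderExtensions_leftPerp (E.rightPerp 𝒳)
  exact ⟨⟨hleft, rfl, precovering, preenveloping, hP, hext, hker⟩,
    preenveloping.exists_mono_preenvelope hsummand⟩

open ExactPaper CategoryTheory Limits in
/-- **Corollary 3.6(1)**: if `(𝒳,𝒴)` is a complete hereditary classical cotorsion pair
and `𝒳` contains all `ℰ`-projective objects, then `(𝒳, 𝒳^⊥ℰ)` is a complete hereditary
`ℰ`-cotorsion pair and every object `A` admits a monomorphic `𝒳^⊥ℰ`-preenvelope
`j : A ⟶ Y` with `Coker j ∈ 𝒳`. -/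
theorem eCotorsionPair_of_classical_cotorsionPair_proj
    {𝒜 : Type u} [Category.{v} 𝒜] [Abelian 𝒜]
    (E : ExactStructure 𝒜)
    (hproj : E.EnoughProjectives) (hinj : E.EnoughInjectives)
    (𝒳 𝒴 : Set 𝒜)
    (hpair : CompleteHereditaryClassicalCotorsionPair 𝒳 𝒴)
    (hP : ∀ P : 𝒜, E.EProjective P → P ∈ 𝒳) :
    E.CompleteHereditaryCotorsionPair 𝒳 (E.rightPerp 𝒳) ∧
      ∀ A : 𝒜, ∃ (Y : 𝒜) (j : A ⟶ Y),
        Mono j ∧ IsPreenvelope (E.rightPerp 𝒳) j ∧ cokernel j ∈ 𝒳 := by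
  obtain ⟨h𝒳, rfl, hprecover, -, hker⟩ := hpair
  exact eCotorsionPair_of_classical_cotorsionPair_proj_general E hproj hinj 𝒳 hprecover
    (h𝒳 ▸ closedUnderDirectSummands_leftPerp1 (rightPerp1 𝒳))
    (fun S hS ↦ hker S (E.shortExact_of_conflation S hS)) hP
end

section
/- Let R be an associative unital ring and let ℰ be an exact structure on the category Mod R of right R-modules such that Mod R has enough ℰ-projectives and enough ℰ-injectives and ℰ contains all pure exact sequences. Let 𝒳 be a class of pure projective right R-modules such that each X ∈ 𝒳 admits an exact sequence C₂ → C₁ → C₀ → X → 0 in which each Cᵢ is finitely presented and ℰ-projective and each induced short exact sequence 0 → Ω_{i+1} → Cᵢ → Ωᵢ → 0 (with Ω₀ = X and Ωᵢ the image of Cᵢ → C_{i−1}) is a conflation. Then the class 𝒳^⊥ = {N : every conflation 0 → N → Z → X → 0 with X ∈ 𝒳 splits} is covering: every right R-module admits an 𝒳^⊥-cover. -/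
open CategoryTheory Category Limits

universe v u

namespace ExactPaper

open CategoryTheory Limits

variable {R : Type u} [Ring R]

/-- A pure exact sequence of right `R`-modules (i.e. of `Rᵐᵒᵖ`-modules): a short exact
sequence which stays exact after applying `Hom_R(F, −)` for every finitely presented
right `R`-module `F`. -/
def PureSES (S : ShortComplex (ModuleCat.{u} Rᵐᵒᵖ)) : Prop :=
  S.ShortExact ∧ ∀ F : ModuleCat.{u} Rᵐᵒᵖ, Module.FinitePresentation Rᵐᵒᵖ F →
    ∀ h : F ⟶ S.X₃, ∃ k : F ⟶ S.X₂, k ≫ S.g = h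

/-- A pure projective right `R`-module: projective with respect to pure exact sequences. -/
def PureProjective (P : ModuleCat.{u} Rᵐᵒᵖ) : Prop :=
  ∀ S : ShortComplex (ModuleCat.{u} Rᵐᵒᵖ), PureSES S →
    ∀ h : P ⟶ S.X₃, ∃ k : P ⟶ S.X₂, k ≫ S.g = h

/-- A pure injective right `R`-module: injective with respect to pure exact sequences. -/
def PureInjective (I : ModuleCat.{u} Rᵐᵒᵖ) : Prop :=
  ∀ S : ShortComplex (ModuleCat.{u} Rᵐᵒᵖ), PureSES S →
    ∀ h : S.X₁ ⟶ I, ∃ k : S.X₂ ⟶ I, S.f ≫ k = h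

end ExactPaper

/-!
Choose a conflation `Ω → C → X` with `C` an `ℰ`-projective module and `Ω` finitely presented. Then
`Ext¹_ℰ(X, N) = 0` if and only if every map `Ω → N` extends to `C`, a condition inherited by direct
sums and by pure quotients because `Ω` is finitely presented. It remains to see that every class
`𝒴` of modules closed under direct sums and pure quotients is covering.

* Precovers (Bican, El Bashir and Enochs): there is a cardinal `κ`, depending only on `R` and `A`,
  such that every map `M → A` factors through a pure quotient of `M` of size at most `κ`. For
  `M ∈ 𝒴` this quotient is again in `𝒴`, so the direct sum of a representative set of maps to `A`
  from modules in `𝒴` of size at most `κ` is a precover.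
* Covers (Enochs): a filtered colimit is a pure quotient of a direct sum, so `𝒴` is closed under
  colimits of chains. Colimits of sufficiently long chains of precovers then produce one all of
  whose endomorphisms over `A` are injective, and finally bijective.
-/

namespace ExactPaper

section Purity

variable {R : Type*} [Ring R] {M : Type*} [AddCommGroup M] [Module R M]
  {N : Type*} [AddCommGroup N] [Module R N]

theorem exists_le_of_directed_of_fg {ι : Type*} [Nonempty ι] {P : ι → Submodule R M}
    (hP : Directed (· ≤ ·) P) {S : Submodule R M} (hS : S.FG) (hSP : ∀ x ∈ S, ∃ i, x ∈ P i) :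
    ∃ i, S ≤ P i := by
  have hle : S ≤ sSup (Set.range P) := fun x hx ↦
    have ⟨i, hi⟩ := hSP x hx
    Submodule.mem_iSup_of_mem i hi
  obtain ⟨_, ⟨i, rfl⟩, hi⟩ := (CompleteLattice.isCompactElement_iff_le_of_directed_sSup_le _ _).mp
    ((Submodule.fg_iff_compact S).mp hS) _ (Set.range_nonempty P) hP.directedOn_range hle
  exact ⟨i, hi⟩

/-- Purity of a submodule `P` of `M`, as solvability of finite linear systems: a system with
relations `K` in `n` unknowns whose constants lie in `P` and which has a solution `y` in `M` also
has a solution in `P`. -/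
def IsPure (P : Submodule R M) : Prop :=
  ∀ (n : ℕ) (K : Submodule R (Fin n → R)), K.FG → ∀ y : (Fin n → R) →ₗ[R] M, K ≤ P.comap y →
    ∃ y' : (Fin n → R) →ₗ[R] M, LinearMap.range y' ≤ P ∧ ∀ v ∈ K, y' v = y v

theorem IsPure.exists_comp_eq {p : M →ₗ[R] N} (hp : Function.Surjective p)
    (hpure : IsPure (LinearMap.ker p)) {F : Type*} [AddCommGroup F] [Module R F]
    [Module.FinitePresentation R F] (g : F →ₗ[R] N) : ∃ h : F →ₗ[R] M, p ∘ₗ h = g := by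
  obtain ⟨n, K, e, hK⟩ := Module.FinitePresentation.exists_fin R F
  obtain ⟨y, hy⟩ := Module.projective_lifting_property p (g ∘ₗ e.symm ∘ₗ K.mkQ) hp
  have hpy (v) : p (y v) = g (e.symm (K.mkQ v)) := LinearMap.congr_fun hy v
  have mkQ_eq_zero {v} (hv : v ∈ K) : K.mkQ v = 0 := (Submodule.Quotient.mk_eq_zero K).mpr hv
  obtain ⟨y', hy'_mem, hy'_eq⟩ := hpure n K hK y fun v hv ↦ by
    rw [Submodule.mem_comap, LinearMap.mem_ker, hpy, mkQ_eq_zero hv, map_zero, map_zero]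
  have hK_le : K ≤ LinearMap.ker (y - y') := fun v hv ↦ by simp [hy'_eq v hv]
  refine ⟨K.liftQ (y - y') hK_le ∘ₗ e, ?_⟩
  ext x
  obtain ⟨v, hv⟩ := K.mkQ_surjective (e x)
  have hpy' : p (y' v) = 0 := hy'_mem ⟨v, rfl⟩
  calc p (K.liftQ (y - y') hK_le (e x)) = p (y v - y' v) := by rw [← hv]; rfl
    _ = g x := by rw [map_sub, hpy', sub_zero, hpy, hv, e.symm_apply_apply]

theorem isPure_ker_of_exists_comp_eq {R : Type u} [Ring R] [Module R M] [Module R N]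
    {p : M →ₗ[R] N}
    (hp : ∀ (F : Type u) [AddCommGroup F] [Module R F] [Module.FinitePresentation R F]
      (g : F →ₗ[R] N), ∃ h : F →ₗ[R] M, p ∘ₗ h = g) :
    IsPure (LinearMap.ker p) := by
  intro n K hK y hy
  have := Module.finitePresentation_of_surjective K.mkQ K.mkQ_surjective (by rwa [K.ker_mkQ])
  obtain ⟨h, hh⟩ := hp _ (K.liftQ (p ∘ₗ y) hy)
  have hph (v) : p (h (K.mkQ v)) = p (y v) := LinearMap.congr_fun hh (K.mkQ v)
  refine ⟨y - h ∘ₗ K.mkQ, ?_, fun v hv ↦ ?_⟩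
  · rintro _ ⟨v, rfl⟩
    rw [LinearMap.mem_ker, LinearMap.sub_apply, map_sub, LinearMap.comp_apply, hph, sub_self]
  · have : K.mkQ v = 0 := (Submodule.Quotient.mk_eq_zero K).mpr hv
    rw [LinearMap.sub_apply, LinearMap.comp_apply, this, map_zero, sub_zero]

theorem isPure_bot : IsPure (⊥ : Submodule R M) := fun _ _ _ _ hy ↦
  ⟨0, by simp, fun v hv ↦ ((Submodule.mem_bot R).mp (hy hv)).symm⟩

theorem isPure_sSup {c : Set (Submodule R M)} (hc : DirectedOn (· ≤ ·) c) (hne : c.Nonempty)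
    (hpure : ∀ P ∈ c, IsPure P) : IsPure (sSup c) := by
  intro n K hK y hy
  have : Nonempty c := hne.to_subtype
  obtain ⟨P, hKP⟩ := exists_le_of_directed_of_fg (directedOn_iff_directed.mp hc) (hK.map y)
    fun x hx ↦ by
      have hx' : x ∈ sSup c := Submodule.map_le_iff_le_comap.mpr hy hx
      simpa using (Submodule.mem_sSup_of_directed hne hc).mp hx'
  obtain ⟨y', hy'_mem, hy'_eq⟩ := hpure P P.2 n K hK y (Submodule.map_le_iff_le_comap.mp hKP)
  exact ⟨y', hy'_mem.trans (le_sSup P.2), hy'_eq⟩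

theorem IsPure.comap {p : M →ₗ[R] N} (hp : Function.Surjective p)
    (hker : IsPure (LinearMap.ker p)) {P : Submodule R N} (hP : IsPure P) :
    IsPure (P.comap p) := by
  intro n K hK y hy
  obtain ⟨z, hz_mem, hz_eq⟩ := hP n K hK (p ∘ₗ y) hy
  obtain ⟨y₁, hy₁⟩ := Module.projective_lifting_property p z hp
  have hpy₁ (v) : p (y₁ v) = z v := LinearMap.congr_fun hy₁ v
  obtain ⟨y₂, hy₂_mem, hy₂_eq⟩ := hker n K hK (y - y₁) fun v hv ↦ by
    simp [hpy₁, hz_eq v hv]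
  refine ⟨y₁ + y₂, ?_, fun v hv ↦ by simp [hy₂_eq v hv]⟩
  rintro _ ⟨v, rfl⟩
  have : p (y₂ v) = 0 := hy₂_mem ⟨v, rfl⟩
  simpa [hpy₁, this] using hz_mem ⟨v, rfl⟩

theorem IsPure.range_sub {F : Type*} [AddCommGroup F] [Module R F] {P : Submodule R M}
    {σ τ : F →ₗ[R] M} (hpure : IsPure (LinearMap.range σ ⊔ P)) (hτ : LinearMap.range τ ≤ P)
    (hστ : ∀ v, σ v ∈ P → τ v = σ v) : IsPure (LinearMap.range (σ - τ)) := by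
  intro n K hK y hy
  obtain ⟨z, hz_mem, hz_eq⟩ := hpure n K hK y fun v hv ↦ by
    obtain ⟨w, hw⟩ := hy hv
    rw [Submodule.mem_comap, ← hw]
    exact sub_mem (Submodule.mem_sup_left ⟨w, rfl⟩) (Submodule.mem_sup_right (hτ ⟨w, rfl⟩))
  obtain ⟨d, hd⟩ : ∃ d : (Fin n → R) →ₗ[R] F, P.mkQ ∘ₗ σ ∘ₗ d = P.mkQ ∘ₗ z := by
    have hz_range (v) : P.mkQ (z v) ∈ LinearMap.range (P.mkQ ∘ₗ σ) := by
      obtain ⟨_, ⟨w, rfl⟩, q, hq, hwq⟩ := Submodule.mem_sup.mp (hz_mem ⟨v, rfl⟩)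
      exact ⟨w, (Submodule.Quotient.eq P).mpr (by rw [← hwq]; simpa using hq)⟩
    obtain ⟨d, hd⟩ := Module.projective_lifting_property (P.mkQ ∘ₗ σ).rangeRestrict
      ((P.mkQ ∘ₗ z).codRestrict _ hz_range) (LinearMap.surjective_rangeRestrict _)
    exact ⟨d, LinearMap.ext fun v ↦ congrArg Subtype.val (LinearMap.congr_fun hd v)⟩
  have hzd (v) : z v - σ (d v) ∈ P := by
    rw [← Submodule.Quotient.eq]
    exact (LinearMap.congr_fun hd v).symm
  refine ⟨(σ - τ) ∘ₗ d, LinearMap.range_comp_le_range _ _, fun v hv ↦ ?_⟩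
  obtain ⟨w, hw⟩ := hy hv
  have hmem : σ (w - d v) ∈ P := by
    have : σ (w - d v) = (z v - σ (d v)) + τ w := by
      rw [hz_eq v hv, ← hw, LinearMap.sub_apply, map_sub]
      abel
    exact this ▸ add_mem (hzd v) (hτ ⟨w, rfl⟩)
  have : (σ - τ) (w - d v) = 0 := by simp [hστ _ hmem]
  rw [LinearMap.comp_apply, ← hw, eq_comm, ← sub_eq_zero, ← map_sub, this]

end Purity

section Saturation

open Cardinal

variable {R : Type u} [Ring R]

theorem exists_card_bound_closed_submodule (R : Type u) [Ring R] {ι : Type u} (ar : ι → Type u) :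
    ∃ κ : Cardinal.{u}, ∀ (M : Type u) [AddCommGroup M] [Module R M]
      (op : ∀ i, (ar i → M) → M) (x : M), ∃ N : Submodule R M,
        #N ≤ κ ∧ x ∈ N ∧ ∀ i s, (∀ a, s a ∈ N) → op i s ∈ N := by
  let ar' : ι ⊕ (R × R) ⊕ PUnit.{u + 1} → Type u :=
    Sum.elim ar (Sum.elim (fun _ ↦ ULift Bool) fun _ ↦ PEmpty)
  refine ⟨#(WType ar'), fun M _ _ op x ↦ ?_⟩
  let eval : (Σ b, ar' b → M) → M
    | ⟨.inl i, s⟩ => op i s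
    | ⟨.inr (.inl r), s⟩ => r.1 • s ⟨true⟩ + r.2 • s ⟨false⟩
    | ⟨.inr (.inr _), _⟩ => x
  let C : Set M := Set.range (WType.elim M eval)
  have eval_mem (b) (s : ar' b → M) (hs : ∀ a, s a ∈ C) : eval ⟨b, s⟩ ∈ C := by
    choose t ht using hs
    exact ⟨.mk b t, by simp only [WType.elim, ht]⟩
  have x_mem : x ∈ C := eval_mem (.inr (.inr ⟨⟩)) PEmpty.elim (fun a ↦ a.elim)
  have comb_mem {a b : M} (ha : a ∈ C) (hb : b ∈ C) (r r' : R) : r • a + r' • b ∈ C :=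
    eval_mem (.inr (.inl (r, r'))) (fun c ↦ if c.down then a else b)
      (by rintro ⟨_ | _⟩ <;> simp [ha, hb])
  let N : Submodule R M :=
    { carrier := C
      zero_mem' := by simpa using comb_mem x_mem x_mem 0 0
      add_mem' := fun ha hb ↦ by simpa using comb_mem ha hb 1 1
      smul_mem' := fun r a ha ↦ by simpa using comb_mem ha ha r 0 }
  exact ⟨N, mk_range_le, x_mem, fun i s ↦ eval_mem (.inl i) s⟩

/-- `N` is saturated for `F` and `f`: every map `F → M` can be replaced by one into `N` which agrees
with it where it already lands in `N` and has the same composite with `f`. With `F` finite free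
this gives purity of `N`; with `F` a large free module it moves pure extensions of `N` into
`ker f`. -/
def IsSaturated (F : Type*) [AddCommGroup F] [Module R F] {M A : Type*} [AddCommGroup M]
    [Module R M] [AddCommGroup A] [Module R A] (f : M →ₗ[R] A) (N : Submodule R M) : Prop :=
  ∀ σ : F →ₗ[R] M, ∃ τ : F →ₗ[R] M,
    LinearMap.range τ ≤ N ∧ (∀ v, σ v ∈ N → τ v = σ v) ∧ f ∘ₗ τ = f ∘ₗ σ

theorem exists_card_bound_isSaturated {ι : Type u} (F : ι → ModuleCat.{u} R) (A : Type u)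
    [AddCommGroup A] [Module R A] :
    ∃ κ : Cardinal.{u}, ∀ (M : Type u) [AddCommGroup M] [Module R M] (f : M →ₗ[R] A) (x : M),
      ∃ N : Submodule R M, #N ≤ κ ∧ x ∈ N ∧ ∀ i, IsSaturated (F i) f N := by
  obtain ⟨κ, hκ⟩ := exists_card_bound_closed_submodule R
    (ι := Σ i, Submodule R (F i) × (F i →ₗ[R] A) × F i) (fun b ↦ b.2.1)
  refine ⟨κ, fun M _ _ f x ↦ ?_⟩
  let Extends (i) (V : Submodule R (F i)) (t : F i →ₗ[R] A) (s : V → M) (τ : F i →ₗ[R] M) : Prop :=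
    (∀ v : V, τ v = s v) ∧ f ∘ₗ τ = t
  obtain ⟨N, hN, hx, hclosed⟩ := hκ M
    (fun ⟨i, V, t, a⟩ s ↦ Classical.epsilon (Extends i V t s) a) x
  refine ⟨N, hN, hx, fun i σ ↦ ?_⟩
  let V := N.comap σ
  have hτ : Extends i V (f ∘ₗ σ) (fun v ↦ σ v) (Classical.epsilon _) :=
    Classical.epsilon_spec ⟨σ, fun _ ↦ rfl, rfl⟩
  refine ⟨_, ?_, fun v hv ↦ hτ.1 ⟨v, hv⟩, hτ.2⟩
  rintro _ ⟨a, rfl⟩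
  exact hclosed ⟨i, V, f ∘ₗ σ, a⟩ (fun v ↦ σ v) fun v ↦ v.2

end Saturation

section SmallPure

open Cardinal

variable {R : Type u} [Ring R]

theorem isPure_of_isSaturated {M A : Type*} [AddCommGroup M] [Module R M] [AddCommGroup A]
    [Module R A] {f : M →ₗ[R] A} {N : Submodule R M}
    (hN : ∀ n : ℕ, IsSaturated (Fin n → R) f N) : IsPure N := fun n _ _ y hy ↦
  have ⟨y', hy'_mem, hy'_eq, _⟩ := hN n y
  ⟨y', hy'_mem, fun v hv ↦ hy'_eq v (hy hv)⟩

theorem exists_card_bound_isPure_mem (R : Type u) [Ring R] :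
    ∃ κ : Cardinal.{u}, ∀ (M : Type u) [AddCommGroup M] [Module R M] (x : M),
      ∃ N : Submodule R M, #N ≤ κ ∧ x ∈ N ∧ IsPure N := by
  obtain ⟨κ, hκ⟩ := exists_card_bound_isSaturated
    (fun n : ULift.{u} ℕ ↦ ModuleCat.of R (Fin n.down → R)) PUnit
  refine ⟨κ, fun M _ _ x ↦ ?_⟩
  obtain ⟨N, hcard, hx, hsat⟩ := hκ M 0 x
  exact ⟨N, hcard, hx, isPure_of_isSaturated fun n ↦ hsat ⟨n⟩⟩

theorem exists_isPure_ne_bot_le_ker_of_isSaturated {Λ M A : Type*} [AddCommGroup M] [Module R M]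
    [AddCommGroup A] [Module R A] {f : M →ₗ[R] A} {N : Submodule R M} (hN : IsPure N)
    (hsat : IsSaturated (Λ →₀ R) f N) {S : Submodule R (M ⧸ N)} (hS : IsPure S) (hS_ne : S ≠ ⊥)
    {g : Λ → S} (hg : Function.Surjective g) :
    ∃ P : Submodule R M, IsPure P ∧ P ≠ ⊥ ∧ P ≤ LinearMap.ker f := by
  obtain ⟨σ, hσ⟩ := Module.projective_lifting_property N.mkQ
    (S.subtype ∘ₗ Finsupp.linearCombination R g) N.mkQ_surjective
  have hσS : LinearMap.range (N.mkQ ∘ₗ σ) = S := by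
    rw [hσ, LinearMap.range_comp_of_range_eq_top, Submodule.range_subtype]
    exact LinearMap.range_eq_top.mpr (Finsupp.linearCombination_surjective R hg)
  have hσN : IsPure (LinearMap.range σ ⊔ N) := by
    have : S.comap N.mkQ = LinearMap.range σ ⊔ N := by
      rw [← hσS, LinearMap.range_comp, Submodule.comap_map_mkQ, sup_comm]
    rw [← this]
    exact .comap N.mkQ_surjective (by rwa [Submodule.ker_mkQ]) hS
  obtain ⟨τ, hτN, hστ, hfτ⟩ := hsat σ
  refine ⟨LinearMap.range (σ - τ), hσN.range_sub hτN hστ, fun hbot ↦ hS_ne ?_, ?_⟩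
  · rw [LinearMap.range_eq_bot, sub_eq_zero] at hbot
    rwa [← hσS, hbot, LinearMap.range_eq_bot, ← LinearMap.range_le_ker_iff, Submodule.ker_mkQ]
  · rw [LinearMap.range_le_ker_iff, LinearMap.comp_sub, hfτ, sub_self]

theorem exists_isPure_ne_bot_le_ker (R : Type u) [Ring R] (A : Type u) [AddCommGroup A]
    [Module R A] :
    ∃ κ : Cardinal.{u}, ∀ (M : Type u) [AddCommGroup M] [Module R M] (f : M →ₗ[R] A), κ < #M →
      ∃ P : Submodule R M, IsPure P ∧ P ≠ ⊥ ∧ P ≤ LinearMap.ker f := by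
  obtain ⟨μ, hμ⟩ := exists_card_bound_isPure_mem R
  let F : ULift.{u} ℕ ⊕ PUnit.{u + 1} → ModuleCat.{u} R :=
    Sum.elim (fun n ↦ ModuleCat.of R (Fin n.down → R)) fun _ ↦ ModuleCat.of R (μ.out →₀ R)
  obtain ⟨κ, hκ⟩ := exists_card_bound_isSaturated F A
  refine ⟨κ, fun M _ _ f hM ↦ ?_⟩
  obtain ⟨N, hN, -, hsat⟩ := hκ M f 0
  have hN_pure : IsPure N := isPure_of_isSaturated fun n ↦ hsat (.inl ⟨n⟩)
  have hsat_free : IsSaturated (μ.out →₀ R) f N := hsat (.inr ⟨⟩)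
  obtain ⟨x, hx⟩ : ∃ x, x ∉ N := by
    by_contra! hall
    exact hM.not_ge ((mk_le_of_injective (f := fun x ↦ (⟨x, hall x⟩ : N))
      fun _ _ h ↦ congrArg Subtype.val h).trans hN)
  obtain ⟨S, hS, hxS, hS_pure⟩ := hμ (M ⧸ N) (N.mkQ x)
  obtain ⟨g⟩ : Nonempty (S ↪ μ.out) := by rwa [← le_def, mk_out]
  refine exists_isPure_ne_bot_le_ker_of_isSaturated hN_pure hsat_free hS_pure ?_
    (Function.invFun_surjective g.injective)
  rintro rfl
  exact hx ((Submodule.Quotient.mk_eq_zero N).mp hxS)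

theorem exists_card_bound_isPure_le_ker (R : Type u) [Ring R] (A : Type u) [AddCommGroup A]
    [Module R A] :
    ∃ κ : Cardinal.{u}, ∀ (M : Type u) [AddCommGroup M] [Module R M] (f : M →ₗ[R] A),
      ∃ P : Submodule R M, IsPure P ∧ P ≤ LinearMap.ker f ∧ #(M ⧸ P) ≤ κ := by
  obtain ⟨κ, hκ⟩ := exists_isPure_ne_bot_le_ker R A
  refine ⟨κ, fun M _ _ f ↦ ?_⟩
  obtain ⟨P, -, ⟨hP, hPf⟩, hmax⟩ := zorn_le_nonempty₀ {P | IsPure P ∧ P ≤ LinearMap.ker f}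
    (fun c hc hchain y hy ↦ ⟨sSup c, ⟨isPure_sSup hchain.directedOn ⟨y, hy⟩ fun P hP ↦ (hc hP).1,
      sSup_le fun P hP ↦ (hc hP).2⟩, fun _ ↦ le_sSup⟩) ⊥ ⟨isPure_bot, bot_le⟩
  refine ⟨P, hP, hPf, not_lt.mp fun hlt ↦ ?_⟩
  obtain ⟨S, hS, hS_ne, hSf⟩ := hκ (M ⧸ P) (P.liftQ f hPf) hlt
  have hle : S.comap P.mkQ ≤ P := hmax
    ⟨.comap P.mkQ_surjective (by rwa [Submodule.ker_mkQ]) hS, fun x hx ↦ hSf hx⟩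
    fun x hx ↦ by simp [(Submodule.Quotient.mk_eq_zero P).mpr hx]
  refine hS_ne (le_bot_iff.mp fun z hz ↦ ?_)
  obtain ⟨x, rfl⟩ := P.mkQ_surjective z
  exact (Submodule.Quotient.mk_eq_zero P).mpr (hle hz)

end SmallPure

section Minimality

open Cardinal

universe w

variable {C : Type u} [Category.{v} C]

/-- Closure of a class of objects under colimits of chains, that is, of diagrams indexed by nonempty
linear orders (well-ordered or not) in the universe `w₀`. -/
def ClosedUnderChainColimits.{w₀, v₀, u₀} {C : Type u₀} [Category.{v₀} C]
    (P : ObjectProperty C) : Prop :=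
  ∀ (J : Type w₀) [LinearOrder J] [Nonempty J], P.IsClosedUnderColimitsOfShape J

theorem exists_functor_map_succ {J : Type w} [LinearOrder J] [OrderBot J] [SuccOrder J]
    [WellFoundedLT J] [NoMaxOrder J] [HasFilteredColimitsOfSize.{w, w} C] {P : ObjectProperty C}
    (hP : ClosedUnderChainColimits.{w} P) (W : MorphismProperty C) {X₀ : C} (hX₀ : P X₀)
    (hstep : ∀ X, P X → ∃ (Y : C) (f : X ⟶ Y), P Y ∧ W f) :
    ∃ F : J ⥤ C, (∀ j, P (F.obj j)) ∧ ∀ j, W (F.map (homOfLE (Order.le_succ j))) := by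
  classical
  have : HasIterationOfShape J C :=
    ⟨fun j hj ↦ have : Nonempty (Set.Iio j) := hj.nonempty_Iio.to_subtype; inferInstance,
      inferInstance⟩
  have hstep' (X : C) : ∃ (Y : C) (f : X ⟶ Y), P X → P Y ∧ W f := by
    by_cases hX : P X
    · obtain ⟨Y, f, hf⟩ := hstep X hX
      exact ⟨Y, f, fun _ ↦ hf⟩
    · exact ⟨X, 𝟙 X, fun h ↦ absurd h hX⟩
  choose next toNext hnext using hstep'
  let Φ : SmallObject.SuccStruct C := ⟨X₀, next, toNext⟩
  let F := Φ.iterationFunctor J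
  have map_succ (j : J) :
      Arrow.mk (F.map (homOfLE (Order.le_succ j))) = Arrow.mk (toNext (F.obj j)) :=
    (Φ.prop_iff _).mp (Φ.prop_iterationFunctor_map_succ j (not_isMax j))
  have hF (j : J) : P (F.obj j) := by
    induction j using SuccOrder.limitRecOn with
    | isMin j hj =>
      obtain rfl := hj.eq_bot
      exact (show F.obj ⊥ = X₀ from (Φ.iter ⊥).obj_bot) ▸ hX₀
    | succ j _ ih =>
      have : F.obj (Order.succ j) = next (F.obj j) := congrArg (·.right) (map_succ j)
      exact this ▸ (hnext _ ih).1
    | isSuccLimit j hj ih =>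
      have : Nonempty (Set.Iio j) := hj.nonempty_Iio.to_subtype
      have := hP (Set.Iio j)
      exact P.prop_of_isColimit (F.isColimitOfIsWellOrderContinuous j hj) fun i ↦ ih i.1 i.2
  refine ⟨F, hF, fun j ↦ ?_⟩
  have : Arrow.mk (F.map (homOfLE (Order.le_succ j))) ∈ W.toSet :=
    map_succ j ▸ (hnext _ (hF j)).2
  exact this

theorem exists_wellOrder_card_gt (θ : Cardinal.{w}) :
    ∃ (J : Type w) (_ : LinearOrder J) (_ : OrderBot J) (_ : SuccOrder J) (_ : WellFoundedLT J)
      (_ : NoMaxOrder J), θ < #J := by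
  let κ := Order.succ (max ℵ₀ θ)
  have hκ : ℵ₀ ≤ κ := (le_max_left _ _).trans (Order.le_succ _)
  have : Nonempty κ.ord.ToType := by simpa using (aleph0_pos.trans_le hκ).ne'
  refine ⟨κ.ord.ToType, inferInstance, WellFoundedLT.toOrderBot _, inferInstance, inferInstance,
    noMaxOrder hκ, ?_⟩
  rw [mk_ord_toType]
  exact (le_max_right _ _).trans_lt (Order.lt_succ _)

/-- The objects of the class `P` which receive a morphism from every object of `P`. For `P` the
objects of `Over A` whose source lies in a class `𝒴`, these are the `𝒴`-precovers of `A`. -/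
def weaklyTerminal (P : ObjectProperty C) : ObjectProperty C := fun T ↦
  P T ∧ ∀ X, P X → Nonempty (X ⟶ T)

/-- The objects `X` such that every morphism from `X` to an object of the class `P` is injective
on the underlying sets given by `U`. -/
def injectiveInto (U : C ⥤ Type w) (P : ObjectProperty C) : ObjectProperty C := fun X ↦
  ∀ ⦃Z : C⦄ (g : X ⟶ Z), P Z → Function.Injective (U.map g)

theorem exists_rep_pair {J : Type w} [LinearOrder J] {F : J ⥤ Type w} {c : Cocone F}
    (hc : IsColimit c) (a b : c.pt) :
    ∃ (j : J) (x y : F.obj j), c.ι.app j x = a ∧ c.ι.app j y = b := by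
  obtain ⟨i, x, rfl⟩ := Types.jointly_surjective_of_isColimit hc a
  obtain ⟨j, y, rfl⟩ := Types.jointly_surjective_of_isColimit hc b
  refine ⟨max i j, F.map (homOfLE (le_max_left i j)) x, F.map (homOfLE (le_max_right i j)) y,
    ?_, ?_⟩
  · rw [← comp_apply, c.w]
  · rw [← comp_apply, c.w]

theorem closedUnderChainColimits_injectiveInto (U : C ⥤ Type w)
    [PreservesFilteredColimitsOfSize.{w, w} U] (P : ObjectProperty C) :
    ClosedUnderChainColimits.{w} (injectiveInto U P) := by
  refine fun J _ _ ↦ ⟨?_⟩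
  rintro X ⟨hX⟩ Z g hZ a b hab
  obtain ⟨j, x, y, rfl, rfl⟩ := exists_rep_pair (isColimitOfPreserves U hX.isColimit) a b
  congr 1
  apply hX.prop_diag_obj j (hX.ι.app j ≫ g) hZ
  rw [U.map_comp, comp_apply, comp_apply]
  exact hab

theorem ClosedUnderChainColimits.inf {P Q : ObjectProperty C} (hP : ClosedUnderChainColimits.{w} P)
    (hQ : ClosedUnderChainColimits.{w} Q) : ClosedUnderChainColimits.{w} (P ⊓ Q) := by
  refine fun J _ _ ↦ ⟨?_⟩
  rintro X ⟨hX⟩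
  have := hP J
  have := hQ J
  exact ⟨(hX.ofLE inf_le_left).prop, (hX.ofLE inf_le_right).prop⟩

theorem ClosedUnderChainColimits.inverseImage {D : Type*} [Category* D] {P : ObjectProperty D}
    (hP : ClosedUnderChainColimits.{w} P) (G : C ⥤ D)
    (hG : ∀ (J : Type w) [LinearOrder J] [Nonempty J], PreservesColimitsOfShape J G) :
    ClosedUnderChainColimits.{w} (P.inverseImage G) := fun J _ _ ↦
  have := hP J
  have := hG J
  inferInstance

variable [HasFilteredColimitsOfSize.{w, w} C] (U : C ⥤ Type w) {P : ObjectProperty C}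

-- A transfinite chain of counterexamples under `T` would identify ever more pairs of elements of
-- `U.obj T`, of which there is only a set.
attribute [local instance] IsFiltered.isConnected in
theorem exists_hom_forall_map_comp_eq_imp (hP : ClosedUnderChainColimits.{w} P) {T : C}
    (hT : P T) :
    ∃ (X : C) (f : T ⟶ X), P X ∧ ∀ (Z : C) (g : X ⟶ Z), P Z → ∀ x y : U.obj T,
      U.map (f ≫ g) x = U.map (f ≫ g) y → U.map f x = U.map f y := by
  by_contra! hcon
  obtain ⟨J, _, _, _, _, _, hJ⟩ := exists_wellOrder_card_gt #(U.obj T × U.obj T)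
  let W : MorphismProperty (Under T) := fun X Y _ ↦
    ∃ p : U.obj T × U.obj T, U.map X.hom p.1 ≠ U.map X.hom p.2 ∧ U.map Y.hom p.1 = U.map Y.hom p.2
  have hQ : ClosedUnderChainColimits.{w} (P.inverseImage (Under.forget T)) :=
    hP.inverseImage _ fun _ _ _ ↦ inferInstance
  have : HasFilteredColimitsOfSize.{w, w} (Under T) := ⟨fun I _ _ ↦ inferInstance⟩
  obtain ⟨F, -, hF⟩ := exists_functor_map_succ (J := J) hQ W (X₀ := Under.mk (𝟙 T)) hT
    fun X hX ↦ by
      obtain ⟨Z, g, hZ, x, y, hxy, hne⟩ := hcon X.right X.hom hX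
      exact ⟨Under.mk (X.hom ≫ g), Under.homMk g, hZ, (x, y), hne, hxy⟩
  choose p hp_ne hp_eq using hF
  refine hJ.not_ge (mk_le_of_injective (f := p)
    (Function.Injective.of_lt_imp_ne fun i j hij heq ↦ hp_ne j ?_))
  have hfac : (F.obj (Order.succ i)).hom ≫ (F.map (homOfLE (Order.succ_le_of_lt hij))).right =
    (F.obj j).hom := Under.w _
  rw [← hfac, ← heq, U.map_comp, comp_apply, comp_apply, hp_eq]

variable [PreservesFilteredColimitsOfSize.{w, w} U]

theorem exists_hom_injectiveInto (hP : ClosedUnderChainColimits.{w} P) {T : C}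
    (hT : weaklyTerminal P T) :
    ∃ X, P X ∧ Nonempty (T ⟶ X) ∧ injectiveInto U P X := by
  obtain ⟨X', f, hX', hf⟩ := exists_hom_forall_map_comp_eq_imp U hP hT.1
  obtain ⟨t⟩ := hT.2 X' hX'
  let F : ULift.{w} ℕ ⥤ C := ULift.orderIso.monotone.functor ⋙
    Functor.ofSequence (X := fun _ ↦ T) fun _ ↦ f ≫ t
  let ι (n : ℕ) : T ⟶ colimit F := colimit.ι F ⟨n⟩
  have := hP (ULift.{w} ℕ)
  refine ⟨colimit F, P.prop_colimit F fun _ ↦ hT.1, ⟨ι 0⟩, fun Z g hZ a b hab ↦ ?_⟩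
  obtain ⟨⟨n⟩, x, y, rfl, rfl⟩ :=
    exists_rep_pair (isColimitOfPreserves U (colimit.isColimit F)) a b
  change U.obj T at x y
  have hab : U.map g (U.map (ι n) x) = U.map g (U.map (ι n) y) := hab
  have hι : f ≫ t ≫ ι (n + 1) = ι n := by
    have : F.map (homOfLE (Nat.le_succ n) : (⟨n⟩ : ULift.{w} ℕ) ⟶ ⟨n + 1⟩) = f ≫ t :=
      Functor.ofSequence_map_homOfLE_succ (X := fun _ ↦ T) (fun _ ↦ f ≫ t) n
    rw [← assoc, ← this]
    exact colimit.w F _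
  have hfxy : U.map f x = U.map f y := by
    apply hf Z ((t ≫ ι (n + 1)) ≫ g) hZ
    rw [← assoc, hι, U.map_comp, comp_apply, comp_apply, hab]
  change U.map (ι n) x = U.map (ι n) y
  rw [← hι, U.map_comp, comp_apply, comp_apply, hfxy]

-- Iterating a non-surjective endomorphism transfinitely yields a strictly increasing chain of
-- subsets of `U.obj T`, since its colimit again maps to `T`, injectively.
theorem map_surjective_of_injectiveInto (hP : ClosedUnderChainColimits.{w} P) {T : C}
    (hT : weaklyTerminal P T) (hinj : injectiveInto U P T) (u : T ⟶ T) :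
    Function.Surjective (U.map u) := by
  by_contra hu
  obtain ⟨J, _, _, _, _, _, hJ⟩ := exists_wellOrder_card_gt #(U.obj T)
  let W : MorphismProperty C := fun _ _ f ↦ ¬ Function.Surjective (U.map f)
  obtain ⟨F, hF, hF_succ⟩ := exists_functor_map_succ (J := J)
    (hP.inf (closedUnderChainColimits_injectiveInto U P)) W ⟨hT.1, hinj⟩ fun X hX ↦ by
      obtain ⟨t⟩ := hT.2 X hX.1
      refine ⟨T, t ≫ u, ⟨hT.1, hinj⟩, fun h ↦ hu ?_⟩
      rw [U.map_comp] at h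
      exact Function.Surjective.of_comp (g := U.map t) h
  have := hP J
  obtain ⟨t⟩ := hT.2 (colimit F) (P.prop_colimit F fun j ↦ (hF j).1)
  have hx (j : J) : ∃ x, ∀ y, U.map (F.map (homOfLE (Order.le_succ j))) y ≠ x := by
    simpa only [W, Function.Surjective, not_forall, not_exists] using hF_succ j
  choose x hx using hx
  refine hJ.not_ge (mk_le_of_injective (f := fun j ↦ U.map (colimit.ι F (Order.succ j) ≫ t) (x j))
    (Function.Injective.of_lt_imp_ne fun i j hij heq ↦ ?_))
  apply hx j (U.map (F.map (homOfLE (Order.succ_le_of_lt hij))) (x i))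
  apply (hF (Order.succ j)).2 (colimit.ι F (Order.succ j) ≫ t) hT.1
  rw [← heq, ← comp_apply, ← comp_apply, ← U.map_comp, ← U.map_comp, ← F.map_comp_assoc,
    colimit.w_assoc]

theorem exists_weaklyTerminal_isIso_end [U.ReflectsIsomorphisms]
    (hP : ClosedUnderChainColimits.{w} P) {T : C} (hT : weaklyTerminal P T) :
    ∃ X, weaklyTerminal P X ∧ ∀ u : X ⟶ X, IsIso u := by
  obtain ⟨X, hX, ⟨t⟩, hinj⟩ := exists_hom_injectiveInto U hP hT
  have hX_weak : weaklyTerminal P X := ⟨hX, fun Y hY ↦ (hT.2 Y hY).map (· ≫ t)⟩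
  refine ⟨X, hX_weak, fun u ↦ ?_⟩
  have : IsIso (U.map u) := (isIso_iff_bijective _).mpr
    ⟨hinj u hX, map_surjective_of_injectiveInto U hP hX_weak hinj u⟩
  exact isIso_of_reflects_iso u U

end Minimality

section FilteredColimit

variable {R : Type u} [Ring R] {J : Type u} [SmallCategory J] [IsFiltered J]
  (F : J ⥤ ModuleCat.{u} R)

theorem exists_le_range_colimit_ι {S : Submodule R (colimit F :)} (hS : S.FG) :
    ∃ j, S ≤ LinearMap.range (colimit.ι F j).hom := by
  have : Nonempty J := IsFiltered.nonempty
  refine exists_le_of_directed_of_fg (fun i j ↦ ?_) hS fun x _ ↦ Concrete.colimit_exists_rep F x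
  have range_le {i j : J} (a : i ⟶ j) :
      LinearMap.range (colimit.ι F i).hom ≤ LinearMap.range (colimit.ι F j).hom := by
    rw [← colimit.w F a, ModuleCat.hom_comp]
    exact LinearMap.range_comp_le_range _ _
  exact ⟨IsFiltered.max i j, range_le (IsFiltered.leftToMax i j),
    range_le (IsFiltered.rightToMax i j)⟩

variable {F}

theorem exists_le_ker_map {V : Type*} [AddCommGroup V] [Module R V] {j : J}
    (y : V →ₗ[R] F.obj j) {K : Submodule R V} (hK : K.FG)
    (hKy : K ≤ LinearMap.ker ((colimit.ι F j).hom ∘ₗ y)) :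
    ∃ (i : J) (a : j ⟶ i), K ≤ LinearMap.ker ((F.map a).hom ∘ₗ y) := by
  have : Nonempty (Under j) := IsFiltered.nonempty
  let P (i : Under j) : Submodule R V := LinearMap.ker ((F.map i.hom).hom ∘ₗ y)
  have P_mono {i i' : Under j} (b : i ⟶ i') : P i ≤ P i' := by
    simp only [P]
    rw [← Under.w b, F.map_comp, ModuleCat.hom_comp, LinearMap.comp_assoc]
    exact LinearMap.ker_le_ker_comp _ _
  have hKP (v) (hv : v ∈ K) : ∃ i, v ∈ P i := by
    have hyv : colimit.ι F j (y v) = colimit.ι F j (0 : F.obj j) := by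
      rw [map_zero]
      exact hKy hv
    obtain ⟨i, a, b, hab⟩ := Concrete.colimit_exists_of_rep_eq F _ _ hyv
    exact ⟨Under.mk a, hab.trans (map_zero _)⟩
  obtain ⟨i, hi⟩ := exists_le_of_directed_of_fg (fun i i' ↦ ⟨IsFiltered.max i i',
    P_mono (IsFiltered.leftToMax i i'), P_mono (IsFiltered.rightToMax i i')⟩) hK hKP
  exact ⟨i.right, i.hom, hi⟩

theorem exists_comp_colimit_ι_eq {N : Type*} [AddCommGroup N] [Module R N]
    [Module.FinitePresentation R N] (g : N →ₗ[R] (colimit F :)) :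
    ∃ (j : J) (h : N →ₗ[R] F.obj j), (colimit.ι F j).hom ∘ₗ h = g := by
  obtain ⟨n, K, e, hK⟩ := Module.FinitePresentation.exists_fin R N
  let g' : (Fin n → R) →ₗ[R] (colimit F :) := g ∘ₗ e.symm ∘ₗ K.mkQ
  obtain ⟨j, hj⟩ := exists_le_range_colimit_ι F
    (Module.Finite.iff_fg.mp (Module.Finite.range g'))
  obtain ⟨y, hy⟩ := Module.projective_lifting_property (colimit.ι F j).hom.rangeRestrict
    (g'.codRestrict _ fun v ↦ hj ⟨v, rfl⟩) (LinearMap.surjective_rangeRestrict _)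
  have hy : (colimit.ι F j).hom ∘ₗ y = g' :=
    LinearMap.ext fun v ↦ congrArg Subtype.val (LinearMap.congr_fun hy v)
  have hKg' : K ≤ LinearMap.ker g' := fun v hv ↦ by
    simp [g', (Submodule.Quotient.mk_eq_zero K).mpr hv]
  obtain ⟨i, a, ha⟩ := exists_le_ker_map y hK (hy ▸ hKg')
  refine ⟨i, K.liftQ _ ha ∘ₗ e, ?_⟩
  ext x
  obtain ⟨v, hv⟩ := K.mkQ_surjective (e x)
  calc colimit.ι F i (K.liftQ _ ha (e x)) = colimit.ι F i (F.map a (y v)) := by rw [← hv]; rfl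
    _ = colimit.ι F j (y v) := colimit.w_apply F a (y v)
    _ = g (e.symm (K.mkQ v)) := LinearMap.congr_fun hy v
    _ = g x := by rw [hv, e.symm_apply_apply]

end FilteredColimit

section Cover

open Cardinal

variable {R : Type u} [Ring R] {𝒴 : Set (ModuleCat.{u} R)}

/-- Closure of a class of modules under quotients by pure submodules. It entails closure under
isomorphisms, the zero submodule being pure. -/
def ClosedUnderPureQuotients (𝒴 : Set (ModuleCat.{u} R)) : Prop :=
  ∀ ⦃M N : ModuleCat.{u} R⦄ (p : M ⟶ N), Function.Surjective p → IsPure (LinearMap.ker p.hom) →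
    M ∈ 𝒴 → N ∈ 𝒴

/-- Closure of a class of modules under small direct sums. -/
def ClosedUnderDirectSums (𝒴 : Set (ModuleCat.{u} R)) : Prop :=
  ∀ ⦃ι : Type u⦄ (M : ι → ModuleCat.{u} R), (∀ i, M i ∈ 𝒴) → ModuleCat.of R (Π₀ i, M i) ∈ 𝒴

theorem ClosedUnderPureQuotients.closedUnderIsos (hquot : ClosedUnderPureQuotients 𝒴) :
    ClosedUnderIsos 𝒴 := by
  intro M N e
  refine hquot e.hom ((ModuleCat.epi_iff_surjective _).mp inferInstance) ?_
  rw [ModuleCat.ker_eq_bot_of_mono]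
  exact isPure_bot

theorem colimit_mem (hquot : ClosedUnderPureQuotients 𝒴) (hsum : ClosedUnderDirectSums 𝒴)
    {J : Type u} [SmallCategory J] [IsFiltered J] (F : J ⥤ ModuleCat.{u} R)
    (hF : ∀ j, F.obj j ∈ 𝒴) : colimit F ∈ 𝒴 := by
  classical
  let p : (Π₀ j, F.obj j) →ₗ[R] (colimit F :) := DFinsupp.lsum ℕ fun j ↦ (colimit.ι F j).hom
  have hp (j) (y : F.obj j) : p (DFinsupp.single j y) = colimit.ι F j y := DFinsupp.lsum_single ..
  refine hquot (ModuleCat.ofHom p) (fun x ↦ ?_) ?_ (hsum _ hF)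
  · obtain ⟨j, y, rfl⟩ := Concrete.colimit_exists_rep F x
    exact ⟨DFinsupp.single j y, hp j y⟩
  · refine isPure_ker_of_exists_comp_eq fun N _ _ _ g ↦ ?_
    obtain ⟨j, h, rfl⟩ := exists_comp_colimit_ι_eq g
    exact ⟨DFinsupp.lsingle j ∘ₗ h, LinearMap.ext fun x ↦ hp j (h x)⟩

theorem closedUnderChainColimits (hquot : ClosedUnderPureQuotients 𝒴)
    (hsum : ClosedUnderDirectSums 𝒴) :
    ClosedUnderChainColimits.{u} (C := ModuleCat.{u} R) (· ∈ 𝒴) := fun J _ _ ↦ by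
  have : ObjectProperty.IsClosedUnderIsomorphisms (C := ModuleCat.{u} R) (· ∈ 𝒴) :=
    ⟨fun e hM ↦ hquot.closedUnderIsos _ _ e hM⟩
  refine .mk' ?_
  rintro _ ⟨F, hF⟩
  exact colimit_mem hquot hsum F hF

theorem exists_solutionSet (hquot : ClosedUnderPureQuotients 𝒴) (A : ModuleCat.{u} R) :
    ∃ (ι : Type u) (Z : ι → ModuleCat.{u} R) (t : ∀ i, Z i ⟶ A), (∀ i, Z i ∈ 𝒴) ∧
      ∀ M ∈ 𝒴, ∀ g : M ⟶ A, ∃ (i : ι) (q : M ⟶ Z i), q ≫ t i = g := by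
  obtain ⟨κ, hκ⟩ := exists_card_bound_isPure_le_ker R A
  let F := κ.out →₀ R
  refine ⟨Σ K : {K : Submodule R F // ModuleCat.of R (F ⧸ K) ∈ 𝒴}, (F ⧸ K.1) →ₗ[R] A,
    fun i ↦ ModuleCat.of R (F ⧸ i.1.1), fun i ↦ ModuleCat.ofHom i.2, fun i ↦ i.1.2,
    fun M hM g ↦ ?_⟩
  obtain ⟨P, hP, hPg, hcard⟩ := hκ M g.hom
  obtain ⟨s⟩ : Nonempty ((M ⧸ P) ↪ κ.out) := by rwa [← le_def, mk_out]
  let e := LinearMap.quotKerEquivOfSurjective _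
    (Finsupp.linearCombination_surjective R (Function.invFun_surjective s.injective))
  let q : M →ₗ[R] _ := e.symm.toLinearMap ∘ₗ P.mkQ
  have hq : IsPure (LinearMap.ker q) := by rwa [LinearEquiv.ker_comp, Submodule.ker_mkQ]
  refine ⟨⟨⟨_, hquot (ModuleCat.ofHom q) (e.symm.surjective.comp P.mkQ_surjective) hq hM⟩,
    P.liftQ g.hom hPg ∘ₗ e⟩, ModuleCat.ofHom q, ?_⟩
  ext x
  simp [q]

theorem exists_isPrecover (hquot : ClosedUnderPureQuotients 𝒴) (hsum : ClosedUnderDirectSums 𝒴)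
    (A : ModuleCat.{u} R) : ∃ (Y : ModuleCat.{u} R) (f : Y ⟶ A), IsPrecover 𝒴 f := by
  classical
  obtain ⟨ι, Z, t, hZ, ht⟩ := exists_solutionSet hquot A
  let f : (Π₀ i, Z i) →ₗ[R] A := DFinsupp.lsum ℕ fun i ↦ (t i).hom
  refine ⟨_, ModuleCat.ofHom f, hsum Z hZ, fun M hM g ↦ ?_⟩
  obtain ⟨i, q, rfl⟩ := ht M hM g
  have hf (z : Z i) : f (DFinsupp.single i z) = t i z := DFinsupp.lsum_single ..
  let incl : Z i →ₗ[R] Π₀ i, Z i := DFinsupp.lsingle (M := fun i ↦ Z i) i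
  exact ⟨q ≫ ModuleCat.ofHom incl, by ext x; exact hf (q x)⟩

theorem exists_isCover (hquot : ClosedUnderPureQuotients 𝒴) (hsum : ClosedUnderDirectSums 𝒴)
    (A : ModuleCat.{u} R) : ∃ (Y : ModuleCat.{u} R) (f : Y ⟶ A), IsCover 𝒴 f := by
  let P : ObjectProperty (Over A) :=
    ObjectProperty.inverseImage (D := ModuleCat.{u} R) (· ∈ 𝒴) (Over.forget A)
  have hP : ClosedUnderChainColimits.{u} P :=
    (closedUnderChainColimits hquot hsum).inverseImage _ fun _ _ _ ↦ inferInstance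
  obtain ⟨Y₀, f₀, hY₀, hf₀⟩ := exists_isPrecover hquot hsum A
  have hweak : weaklyTerminal P (Over.mk f₀) := ⟨hY₀, fun X hX ↦
    have ⟨h, hh⟩ := hf₀ X.left hX X.hom
    ⟨Over.homMk h hh⟩⟩
  obtain ⟨Y, ⟨hY, hY_weak⟩, hiso⟩ :=
    exists_weaklyTerminal_isIso_end (Over.forget A ⋙ forget (ModuleCat.{u} R)) hP hweak
  refine ⟨Y.left, Y.hom, ⟨hY, fun X hX g ↦ ?_⟩, fun h hh ↦ ?_⟩
  · obtain ⟨h⟩ := hY_weak (Over.mk g) hX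
    exact ⟨h.left, Over.w h⟩
  · have := hiso (Over.homMk h hh)
    exact inferInstanceAs (IsIso ((Over.forget A).map (Over.homMk h hh : Y ⟶ Y)))

end Cover

section DirectSum

variable {R ι Ω : Type*} [Ring R] {M : ι → Type*} [∀ i, AddCommGroup (M i)] [∀ i, Module R (M i)]
  [AddCommGroup Ω] [Module R Ω] [Module.Finite R Ω]

theorem exists_finset_forall_notMem_apply_eq_zero (g : Ω →ₗ[R] Π₀ i, M i) :
    ∃ T : Finset ι, ∀ x, ∀ i ∉ T, g x i = 0 := by
  classical
  let P (T : Finset ι) : Submodule R (Π₀ i, M i) := ⨅ i ∉ T, LinearMap.ker (DFinsupp.lapply i)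
  have mem_P {T y} : y ∈ P T ↔ ∀ i ∉ T, y i = 0 := by simp [P, Submodule.mem_iInf]
  have P_mono : Monotone P := fun T T' hT y hy ↦
    mem_P.mpr fun i hi ↦ mem_P.mp hy i fun h ↦ hi (hT h)
  obtain ⟨T, hT⟩ := exists_le_of_directed_of_fg P_mono.directed_le
    (Module.Finite.iff_fg.mp (Module.Finite.range g))
    fun y _ ↦ ⟨y.support, mem_P.mpr fun i hi ↦ DFinsupp.notMem_support_iff.mp hi⟩
  exact ⟨T, fun x ↦ mem_P.mp (hT ⟨x, rfl⟩)⟩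

theorem exists_comp_eq_dfinsupp {C : Type*} [AddCommGroup C] [Module R C] (k : Ω →ₗ[R] C)
    (hM : ∀ i (g : Ω →ₗ[R] M i), ∃ h : C →ₗ[R] M i, h ∘ₗ k = g) (g : Ω →ₗ[R] Π₀ i, M i) :
    ∃ h : C →ₗ[R] Π₀ i, M i, h ∘ₗ k = g := by
  classical
  obtain ⟨T, hT⟩ := exists_finset_forall_notMem_apply_eq_zero g
  choose h hh using fun i ↦ hM i (DFinsupp.lapply i ∘ₗ g)
  have hhk (i x) : h i (k x) = g x i := LinearMap.congr_fun (hh i) x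
  refine ⟨∑ i ∈ T, DFinsupp.lsingle i ∘ₗ h i, ?_⟩
  ext x i
  by_cases hi : i ∈ T
  · simp [DFinsupp.finsetSum_apply, DFinsupp.single_apply, hhk, hi]
  · simp [DFinsupp.finsetSum_apply, DFinsupp.single_apply, hhk, hi, hT x i hi]

end DirectSum

namespace ExactStructure

section Ext

variable {𝒜 : Type u} [Category.{v} 𝒜] [Abelian 𝒜] {E : ExactStructure 𝒜}

theorem conflation_of_admMono_s15 {S : ShortComplex 𝒜} (hf : AdmMono E.conflation S.f)
    (hS : IsColimit (CokernelCofork.ofπ S.g S.zero)) : E.conflation S := by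
  obtain ⟨Z, p, wp, hp⟩ := hf
  let hZ := (E.shortExact_of_conflation _ hp).gIsCokernel
  let e : Z ≅ S.X₃ := hZ.coconePointUniqueUpToIso hS
  have he : p ≫ e.hom = S.g := hZ.comp_coconePointUniqueUpToIso_hom hS .one
  exact E.conflation_of_iso _ _ (ShortComplex.isoMk (S₁ := .mk S.f p wp) (Iso.refl _) (Iso.refl _) e
    (by simp) (by simp [he])) hp

theorem conflation_pushout {S : ShortComplex 𝒜} (hS : E.conflation S) {N : 𝒜} (g : S.X₁ ⟶ N) :
    E.conflation (ShortComplex.mk (pushout.inr S.f g)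
      (pushout.desc S.g 0 (by rw [S.zero, comp_zero])) (pushout.inr_desc _ _ _)) := by
  refine conflation_of_admMono_s15 (E.admMono_pushout _ g ⟨_, _, S.zero, hS⟩) ?_
  have hse := E.shortExact_of_conflation _ hS
  have := hse.epi_g
  refine CokernelCofork.IsColimit.ofπ _ _
    (fun s hs ↦ hse.exact.desc (pushout.inl S.f g ≫ s)
      (by rw [pushout.condition_assoc]; exact hs ▸ comp_zero))
    (fun s hs ↦ pushout.hom_ext ?_ ?_) (fun s hs m hm ↦ ?_)
  · rw [pushout.inl_desc_assoc, hse.exact.g_desc]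
  · rw [pushout.inr_desc_assoc, zero_comp]
    exact hs.symm
  · rw [← cancel_epi S.g, hse.exact.g_desc, ← hm, pushout.inl_desc_assoc]

theorem Ext1Zero.exists_comp_eq {S : ShortComplex 𝒜} (hS : E.conflation S) {N : 𝒜}
    (hN : E.Ext1Zero S.X₃ N) (g : S.X₁ ⟶ N) : ∃ h : S.X₂ ⟶ N, S.f ≫ h = g := by
  obtain ⟨r, hr⟩ := hN _ _ _ _ (conflation_pushout hS g)
  exact ⟨pushout.inl S.f g ≫ r, by rw [pushout.condition_assoc, hr, comp_id]⟩

theorem ext1Zero_of_exists_comp_eq {S : ShortComplex 𝒜} (hS : E.conflation S)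
    (hproj : E.EProjective S.X₂) {N : 𝒜} (hN : ∀ g : S.X₁ ⟶ N, ∃ h : S.X₂ ⟶ N, S.f ≫ h = g) :
    E.Ext1Zero S.X₃ N := by
  intro Z i p w hT
  have hSe := E.shortExact_of_conflation _ hS
  have hTe := E.shortExact_of_conflation _ hT
  have := hSe.epi_g
  have := hTe.mono_f
  obtain ⟨s, hs⟩ : ∃ s : S.X₂ ⟶ Z, s ≫ p = S.g := hproj _ hT S.g
  obtain ⟨t, ht⟩ := hN (hTe.exact.lift (S.f ≫ s) (by simp [hs]))
  have hti : S.f ≫ t ≫ i = S.f ≫ s := by rw [reassoc_of% ht]; exact hTe.exact.lift_f _ _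
  let σ : S.X₃ ⟶ Z := hSe.exact.desc (s - t ≫ i) (by rw [Preadditive.comp_sub, hti, sub_self])
  have hσ : σ ≫ p = 𝟙 S.X₃ := by
    rw [← cancel_epi S.g, hSe.exact.g_desc_assoc, Preadditive.sub_comp, assoc, w, comp_zero,
      sub_zero, hs, comp_id]
  let split := ShortComplex.Splitting.ofExactOfSection _ hTe.exact σ hσ hTe.mono_f
  exact ⟨split.r, split.f_r⟩

end Ext

section Module

variable {R : Type u} [Ring R] {E : ExactStructure (ModuleCat.{u} R)} {X : ModuleCat.{u} R}

/-- `X` is the cokernel term of a conflation `Ω → C → X` with `C` an `ℰ`-projective module and `Ω`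
a finitely presented one. -/
def HasFPSyzygy (E : ExactStructure (ModuleCat.{u} R)) (X : ModuleCat.{u} R) : Prop :=
  ∃ (Ω C : ModuleCat.{u} R) (k : Ω ⟶ C) (d : C ⟶ X) (w : k ≫ d = 0),
    E.conflation (ShortComplex.mk k d w) ∧ E.EProjective C ∧ Module.FinitePresentation R Ω

theorem HasFPSyzygy.closedUnderPureQuotients (hX : E.HasFPSyzygy X) :
    ClosedUnderPureQuotients {N | E.Ext1Zero X N} := by
  obtain ⟨Ω, C, k, d, w, hconf, hproj, _⟩ := hX
  intro M N p hp hpure hM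
  refine ext1Zero_of_exists_comp_eq hconf hproj fun g ↦ ?_
  obtain ⟨l, hl⟩ := hpure.exists_comp_eq hp g.hom
  obtain ⟨h, hh⟩ := hM.exists_comp_eq hconf (ModuleCat.ofHom l)
  refine ⟨h ≫ p, ?_⟩
  rw [← assoc, hh]
  exact ModuleCat.hom_ext hl

theorem HasFPSyzygy.closedUnderDirectSums (hX : E.HasFPSyzygy X) :
    ClosedUnderDirectSums {N | E.Ext1Zero X N} := by
  obtain ⟨Ω, C, k, d, w, hconf, hproj, _⟩ := hX
  intro ι M hM
  refine ext1Zero_of_exists_comp_eq hconf hproj fun g ↦ ?_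
  obtain ⟨h, hh⟩ := exists_comp_eq_dfinsupp k.hom (fun i g ↦
    have ⟨h, hh⟩ := (hM i).exists_comp_eq hconf (ModuleCat.ofHom g)
    ⟨h.hom, congrArg ModuleCat.Hom.hom hh⟩) g.hom
  exact ⟨ModuleCat.ofHom h, ModuleCat.hom_ext hh⟩

theorem HasFPSyzygy.of_conflations {C₀ C₁ C₂ Ω₁ Ω₂ Ω₃ : ModuleCat.{u} R}
    {k₀ : Ω₁ ⟶ C₀} {d₀ : C₀ ⟶ X} {w₀ : k₀ ≫ d₀ = 0}
    {k₁ : Ω₂ ⟶ C₁} {d₁ : C₁ ⟶ Ω₁} {w₁ : k₁ ≫ d₁ = 0}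
    {k₂ : Ω₃ ⟶ C₂} {d₂ : C₂ ⟶ Ω₂} {w₂ : k₂ ≫ d₂ = 0}
    (h₀ : E.conflation (ShortComplex.mk k₀ d₀ w₀)) (h₁ : E.conflation (ShortComplex.mk k₁ d₁ w₁))
    (h₂ : E.conflation (ShortComplex.mk k₂ d₂ w₂)) (hC₀ : E.EProjective C₀)
    [Module.FinitePresentation R C₁] [Module.Finite R C₂] : E.HasFPSyzygy X := by
  have surjective_g {S : ShortComplex (ModuleCat.{u} R)} (hS : E.conflation S) :
      Function.Surjective S.g.hom :=
    (ModuleCat.epi_iff_surjective _).mp (E.shortExact_of_conflation _ hS).epi_g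
  have : Module.Finite R Ω₂ := .of_surjective d₂.hom (surjective_g h₂)
  have ker_fg : (LinearMap.ker d₁.hom).FG := by
    have hrange : LinearMap.range k₁.hom = LinearMap.ker d₁.hom :=
      (E.shortExact_of_conflation _ h₁).exact.moduleCat_range_eq_ker
    rw [← hrange]
    exact Module.Finite.iff_fg.mp (Module.Finite.range k₁.hom)
  exact ⟨Ω₁, C₀, k₀, d₀, w₀, h₀, hC₀,
    Module.finitePresentation_of_surjective d₁.hom (surjective_g h₁) ker_fg⟩

end Module

end ExactStructure

end ExactPaper

open ExactPaper in
theorem rightPerp_covering_of_pureProjective_general {R : Type u} [Ring R]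
    (E : ExactStructure (ModuleCat.{u} R)) {𝒳 : Set (ModuleCat.{u} R)}
    (h𝒳 : ∀ X ∈ 𝒳, E.HasFPSyzygy X) (A : ModuleCat.{u} R) :
    ∃ (Y : ModuleCat.{u} R) (f : Y ⟶ A), IsCover (E.rightPerp 𝒳) f :=
  exists_isCover (𝒴 := E.rightPerp 𝒳)
    (fun _ _ p hp hpure hM X hX ↦ (h𝒳 X hX).closedUnderPureQuotients p hp hpure (hM X hX))
    (fun _ M hM X hX ↦ (h𝒳 X hX).closedUnderDirectSums M fun i ↦ hM i X hX) A

open ExactPaper CategoryTheory Limits in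
/-- **Theorem 4.4(1), second part**: let `ℰ` be an exact structure on `Mod R` with enough
`ℰ`-projectives and `ℰ`-injectives containing all pure exact sequences, and let `𝒳` be a
class of pure projective right `R`-modules such that every `X ∈ 𝒳` admits an
`ℰ`-presentation `C₂ → C₁ → C₀ → X → 0` with each `Cᵢ` finitely presented and
`ℰ`-projective (each induced short exact sequence of syzygies being a conflation).
Then `𝒳^⊥` is covering. -/
theorem rightPerp_covering_of_pureProjective
    {R : Type u} [Ring R]
    (E : ExactStructure (ModuleCat.{u} Rᵐᵒᵖ))
    (hproj : E.EnoughProjectives) (hinj : E.EnoughInjectives)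
    (hpure : ∀ S : ShortComplex (ModuleCat.{u} Rᵐᵒᵖ), PureSES S → E.conflation S)
    (𝒳 : Set (ModuleCat.{u} Rᵐᵒᵖ)) (h𝒳 : ∀ X ∈ 𝒳, PureProjective X)
    (hpres : ∀ X ∈ 𝒳, ∃ (C₀ C₁ C₂ Ω₁ Ω₂ Ω₃ : ModuleCat.{u} Rᵐᵒᵖ)
      (k₀ : Ω₁ ⟶ C₀) (d₀ : C₀ ⟶ X) (w₀ : k₀ ≫ d₀ = 0)
      (k₁ : Ω₂ ⟶ C₁) (d₁ : C₁ ⟶ Ω₁) (w₁ : k₁ ≫ d₁ = 0)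
      (k₂ : Ω₃ ⟶ C₂) (d₂ : C₂ ⟶ Ω₂) (w₂ : k₂ ≫ d₂ = 0),
      E.conflation (ShortComplex.mk k₀ d₀ w₀) ∧
      E.conflation (ShortComplex.mk k₁ d₁ w₁) ∧
      E.conflation (ShortComplex.mk k₂ d₂ w₂) ∧
      Module.FinitePresentation Rᵐᵒᵖ C₀ ∧ Module.FinitePresentation Rᵐᵒᵖ C₁ ∧
      Module.FinitePresentation Rᵐᵒᵖ C₂ ∧
      E.EProjective C₀ ∧ E.EProjective C₁ ∧ E.EProjective C₂) :
    ∀ A : ModuleCat.{u} Rᵐᵒᵖ, ∃ (Y : ModuleCat.{u} Rᵐᵒᵖ) (f : Y ⟶ A),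
      IsCover (E.rightPerp 𝒳) f := by
  refine rightPerp_covering_of_pureProjective_general E fun X hX ↦ ?_
  obtain ⟨C₀, C₁, C₂, Ω₁, Ω₂, Ω₃, k₀, d₀, w₀, k₁, d₁, w₁, k₂, d₂, w₂,
    h₀, h₁, h₂, -, _, _, hC₀, -⟩ := hpres X hX
  exact .of_conflations h₀ h₁ h₂ hC₀
end
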